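/- Let k > 9/2. There exists a constant C depending only on k such that for all Schwartz functions f, g on ℝ³: | ⟨Q(g,f), f⟨v⟩^{2k}⟩ | ≤ C ‖g‖_{L²_k} ( ‖f⟨v⟩^k‖²_{𝖧¹_A} + ‖f‖²_{L²_k} ). -/

import Mathlib

/-!
Put `h = f⟨v⟩^k`, `A = a ∗ g` and `B_i = Σ_j a_ij ∗ ∂_j g`. Integrating by parts once
(`pairing_eq`) and expanding the gradients in terms of `h` (`flux_algebra`), the cross terms cancel
because `A` is symmetric, and

  `⟨Q(g,f), f⟨v⟩^{2k}⟩ = -∫ [A∇h·∇h - k²⟨v⟩⁻⁴h² Av·v - h B·(∇h + k⟨v⟩⁻²h v)] dv`.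

*The terms with `A`.* The quadratic form of `a(z)` is `|z|⁻³|z × ξ|²` (`qform_eq`), which for
`z = v - v*` is at most `64 (1 + |z|⁻¹)⟨v*⟩³ ⟨v⟩⁻³(|ξ|² + |v × ξ|²)` (`qform_bound`): the loss in
`⟨v*⟩` buys exactly the weight and the angular derivatives of the anisotropic norm. Since
`⟨v*⟩^{3-k}` is square integrable for `k > 9/2`, the integral `∫ (1 + |v-v*|⁻¹)⟨v*⟩³|g(v*)| dv*` is
bounded by a multiple of `‖g‖_{L²_k}`, uniformly in `v` (`conv_bound`).

*The term with `B`.* Moving the derivative onto a regularised kernel gives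
`|a_ij ∗ ∂_j g| ≤ 6 |z|⁻² ∗ |g|` (`abs_cv_aK_dS_le`). By `inv_sq_bound` the kernel `|z|⁻²` splits into
a part `⟨v*⟩³⟨v⟩⁻²`, handled as before, and a part `⟨v*⟩³⟨v⟩⁻³|z|⁻² 1_{|z| ≤ 1}`. The latter is
singular; the arithmetic-geometric mean inequality with parameter `N ≈ ‖g‖_{L²_k}` reduces it to
`N⁻¹ ∫∫ |v-v*|⁻² ⟨v*⟩⁶ g(v*)² ⟨v⟩⁻³ h(v)²`, which Fubini's theorem and Hardy's inequality for
`⟨v⟩^{-3/2}h` with pole `v*` bound by `N` times the anisotropic norm (`hardy`, `hardy_conv`).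

All estimates hold for every `N > 0` with `N ≥ ‖g‖_{L²_k}`, and `N ↓ ‖g‖_{L²_k}` concludes.
-/

open MeasureTheory Real Finset

noncomputable section

abbrev E3 := EuclideanSpace ℝ (Fin 3)

/-- The Japanese bracket `⟨v⟩ = √(1+|v|²)`. -/
def jap (v : E3) : ℝ := Real.sqrt (1 + ‖v‖ ^ 2)

/-- The projection matrix `Π(z)` with entries `δ_ij − z_i z_j / |z|²`. -/
def Pi3 (z : E3) : Matrix (Fin 3) (Fin 3) ℝ :=
  Matrix.of fun i j => (if i = j then (1 : ℝ) else 0) - z i * z j / ‖z‖ ^ 2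

/-- The Coulomb Landau kernel `a(z) = |z|⁻¹ Π(z)`. -/
def aK (z : E3) : Matrix (Fin 3) (Fin 3) ℝ :=
  Matrix.of fun i j => ‖z‖⁻¹ * Pi3 z i j

/-- Partial derivative `∂_i f`. -/
def pd (i : Fin 3) (f : E3 → ℝ) : E3 → ℝ :=
  fun v => fderiv ℝ f v (EuclideanSpace.single i 1)

/-- The Landau collision operator with Coulomb potential:
`Q(g,h)(v) = ∇_v · ∫ a(v−v*) ( g(v*) ∇h(v) − ∇g(v*) h(v) ) dv*`. -/
def landauQ (g h : E3 → ℝ) : E3 → ℝ := fun v =>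
  ∑ i : Fin 3, fderiv ℝ (fun w =>
      ∫ vs : E3, ∑ j : Fin 3, aK (w - vs) i j * (g vs * pd j h w - pd j g vs * h w)) v
    (EuclideanSpace.single i 1)

/-- The pairing `⟨f,g⟩ = ∫ f g dv`. -/
def pairL (f g : E3 → ℝ) : ℝ := ∫ v : E3, f v * g v

/-- Weighted Lebesgue norm `‖f‖_{L^p_l} = (∫ |f|^p ⟨v⟩^{lp})^{1/p}`. -/
def Lpl (p l : ℝ) (f : E3 → ℝ) : ℝ :=
  (∫ v : E3, |f v| ^ p * jap v ^ (l * p)) ^ (1 / p)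

/-- Iterated partial derivative in direction `i`. -/
def pdPow (i : Fin 3) : ℕ → (E3 → ℝ) → E3 → ℝ
  | 0, f => f
  | n + 1, f => pd i (pdPow i n f)

/-- Multi-index partial derivative `∂^m f`. -/
def pdM (m : Fin 3 → ℕ) (f : E3 → ℝ) : E3 → ℝ :=
  pdPow 0 (m 0) (pdPow 1 (m 1) (pdPow 2 (m 2) f))

/-- Multi-indices `m` with `|m| ≤ n`. -/
def multiIdx (n : ℕ) : Finset (Fin 3 → ℕ) :=
  (Fintype.piFinset fun _ : Fin 3 => Finset.range (n + 1)).filter fun m => (∑ i, m i) ≤ n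

/-- Square of the weighted Sobolev norm `‖f‖²_{H^n_l} = Σ_{|m|≤n} ‖∂^m f‖²_{L²_l}`. -/
def HSobSq (n : ℕ) (l : ℝ) (f : E3 → ℝ) : ℝ :=
  ∑ m ∈ multiIdx n, (Lpl 2 l (pdM m f)) ^ 2

/-- Weighted Sobolev norm `‖f‖_{H^n_l}`. -/
def HSob (n : ℕ) (l : ℝ) (f : E3 → ℝ) : ℝ :=
  Real.sqrt (HSobSq n l f)

/-- Rotational derivative `(v_i ∂_j − v_j ∂_i) f`. -/
def rotD (i j : Fin 3) (f : E3 → ℝ) : E3 → ℝ :=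
  fun v => v i * pd j f v - v j * pd i f v

/-- Square of the anisotropic norm
`‖f‖²_{𝖧¹_A} = Σ_{i<j} ‖(v_i ∂_j − v_j ∂_i) f‖²_{L²_{−3/2}} + ‖f‖²_{H¹_{−3/2}}`. -/
def HAsq (f : E3 → ℝ) : ℝ :=
  (∑ p ∈ Finset.univ.filter (fun p : Fin 3 × Fin 3 => p.1 < p.2),
    (Lpl 2 (-(3/2)) (rotD p.1 p.2 f)) ^ 2) + HSobSq 1 (-(3/2)) f

/-- The anisotropic norm `‖f‖_{𝖧¹_A}`. -/
def HA (f : E3 → ℝ) : ℝ := Real.sqrt (HAsq f)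

end

open scoped SchwartzMap LineDeriv

/-! ### Weights and Schwartz functions -/

lemma one_le_jap (v : E3) : 1 ≤ jap v := by
  unfold jap
  rw [Real.one_le_sqrt]
  nlinarith [sq_nonneg ‖v‖]

lemma jap_pos (v : E3) : 0 < jap v := lt_of_lt_of_le one_pos (one_le_jap v)

lemma jap_sq (v : E3) : jap v ^ 2 = 1 + ‖v‖ ^ 2 := by
  unfold jap
  rw [Real.sq_sqrt (by positivity)]

lemma norm_le_jap (v : E3) : ‖v‖ ≤ jap v := by
  have h1 := jap_sq v
  have h2 := jap_pos v
  nlinarith [norm_nonneg v]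

lemma jap_le (v : E3) : jap v ≤ 1 + ‖v‖ := by
  have h1 := jap_sq v
  have h2 := jap_pos v
  nlinarith [norm_nonneg v]

lemma jap_rpow_eq (s : ℝ) (v : E3) : jap v ^ s = (1 + ‖v‖ ^ 2) ^ (s / 2) := by
  unfold jap
  rw [Real.sqrt_eq_rpow, ← Real.rpow_mul (by positivity)]
  congr 1; ring

lemma jap_rpow_tg (s : ℝ) : Function.HasTemperateGrowth (fun v : E3 => jap v ^ s) := by
  simp_rw [jap_rpow_eq]
  exact Function.hasTemperateGrowth_one_add_norm_sq_rpow E3 (s / 2)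

lemma continuous_jap : Continuous jap := by
  unfold jap; fun_prop

lemma continuous_jap_rpow (s : ℝ) : Continuous (fun v : E3 => jap v ^ s) :=
  (jap_rpow_tg s).1.continuous

/-- The Schwartz function `f ⟨v⟩^s`. -/
noncomputable def wS (s : ℝ) (f : 𝓢(E3, ℝ)) : 𝓢(E3, ℝ) :=
  SchwartzMap.smulLeftCLM ℝ (fun v : E3 => jap v ^ s) f

lemma wS_apply (s : ℝ) (f : 𝓢(E3, ℝ)) (v : E3) : wS s f v = f v * jap v ^ s := by
  unfold wS
  rw [SchwartzMap.smulLeftCLM_apply_apply (jap_rpow_tg s), smul_eq_mul, mul_comm]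

/-- The Schwartz function `∂_i f`. -/
noncomputable def dS (i : Fin 3) (f : 𝓢(E3, ℝ)) : 𝓢(E3, ℝ) :=
  ∂_{(EuclideanSpace.single i (1:ℝ) : E3)} f

lemma dS_apply (i : Fin 3) (f : 𝓢(E3, ℝ)) (v : E3) : dS i f v = pd i f v := rfl

/-- The product of two Schwartz functions. -/
noncomputable def mS (f g : 𝓢(E3, ℝ)) : 𝓢(E3, ℝ) :=
  SchwartzMap.smulLeftCLM ℝ (⇑f) g

lemma mS_apply (f g : 𝓢(E3, ℝ)) (v : E3) : mS f g v = f v * g v := by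
  unfold mS
  rw [SchwartzMap.smulLeftCLM_apply_apply f.hasTemperateGrowth, smul_eq_mul]

lemma norm_sq_eq (v : E3) : ‖v‖ ^ 2 = v 0 ^ 2 + v 1 ^ 2 + v 2 ^ 2 := by
  rw [EuclideanSpace.norm_sq_eq, Fin.sum_univ_three]
  simp

lemma norm_sq_line (v : E3) (i : Fin 3) (t : ℝ) :
    ‖v + t • (EuclideanSpace.single i (1:ℝ) : E3)‖ ^ 2 = ‖v‖ ^ 2 + 2 * t * v i + t ^ 2 := by
  simp only [norm_sq_eq]
  fin_cases i <;> simp <;> ring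

lemma hasDerivAt_norm_sq_line (v : E3) (i : Fin 3) :
    HasDerivAt (fun t : ℝ => ‖v + t • (EuclideanSpace.single i (1:ℝ) : E3)‖ ^ 2) (2 * v i) 0 := by
  simp_rw [norm_sq_line]
  have h : HasDerivAt (fun t : ℝ => ‖v‖ ^ 2 + 2 * t * v i + t ^ 2)
      (2 * 1 * v i + ((2 : ℕ) * (0:ℝ) ^ (2 - 1) * 1)) 0 :=
    ((((hasDerivAt_id (0:ℝ)).const_mul 2).mul_const (v i)).const_add (‖v‖ ^ 2)).add
      ((hasDerivAt_id (0:ℝ)).pow 2)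
  simpa using h

lemma pd_jap_rpow (s : ℝ) (i : Fin 3) (v : E3) :
    pd i (fun v => jap v ^ s) v = s * v i * jap v ^ (s - 2) := by
  unfold pd
  have hd : DifferentiableAt ℝ (fun v : E3 => jap v ^ s) v :=
    ((jap_rpow_tg s).1.differentiable (by simp)) v
  rw [← hd.lineDeriv_eq_fderiv]
  apply HasLineDerivAt.lineDeriv
  have h2 := ((hasDerivAt_norm_sq_line v i).const_add 1).rpow_const (p := s / 2)
    (Or.inl (by positivity))
  unfold HasLineDerivAt
  simp only [jap_rpow_eq]
  refine h2.congr_deriv ?_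
  rw [zero_smul, add_zero, show (s - 2) / 2 = s / 2 - 1 by ring]
  ring

lemma pd_mul_jap_rpow (s : ℝ) (i : Fin 3) (f : 𝓢(E3, ℝ)) (v : E3) :
    pd i (fun v => f v * jap v ^ s) v =
      pd i f v * jap v ^ s + f v * (s * v i * jap v ^ (s - 2)) := by
  rw [← pd_jap_rpow]
  unfold pd
  have hd : DifferentiableAt ℝ (fun v : E3 => jap v ^ s) v :=
    ((jap_rpow_tg s).1.differentiable (by simp)) v
  have := fderiv_fun_mul f.differentiableAt hd (x := v)
  rw [this]
  simp
  ring

/-! ### Convolution with admissible kernels -/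

/-- Admissible convolution kernels: measurable, and integrable against `(1+|z|)^{-4}`. -/
def Adm (κ : E3 → ℝ) : Prop :=
  Measurable κ ∧ Integrable (fun z => κ z * ((1 + ‖z‖) ^ 4)⁻¹)

/-- The convolution `(κ ∗ G)(w) = ∫ κ(w - v) G(v) dv`. -/
noncomputable def cv (κ G : E3 → ℝ) : E3 → ℝ := fun w => ∫ v, κ (w - v) * G v

lemma cv_eq (κ G : E3 → ℝ) (w : E3) : cv κ G w = ∫ z, κ z * G (w - z) := by
  unfold cv
  rw [← integral_sub_left_eq_self (fun z => κ z * G (w - z)) volume w]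
  simp

lemma schwartz_decay {F : Type*} [NormedAddCommGroup F] [NormedSpace ℝ F] (G : 𝓢(E3, F)) (m : ℕ) :
    ∃ C, 0 ≤ C ∧ ∀ x, ‖G x‖ ≤ C * ((1 + ‖x‖) ^ m)⁻¹ := by
  refine ⟨2 ^ m * (Finset.Iic (m, 0)).sup (fun m => SchwartzMap.seminorm ℝ m.1 m.2) G,
    by positivity, fun x => ?_⟩
  have := SchwartzMap.one_add_le_sup_seminorm_apply (𝕜 := ℝ) (m := (m, 0)) (k := m) (n := 0)
    le_rfl le_rfl G x
  rw [norm_iteratedFDeriv_zero] at this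
  rw [← div_eq_mul_inv, le_div_iff₀ (by positivity), mul_comm]
  exact this

lemma one_add_sub_inv_le (w z : E3) :
    ((1 + ‖w - z‖) ^ 4)⁻¹ ≤ (1 + ‖w‖) ^ 4 * ((1 + ‖z‖) ^ 4)⁻¹ := by
  rw [← div_eq_mul_inv, le_div_iff₀ (by positivity), inv_mul_le_iff₀ (by positivity), ← mul_pow]
  gcongr
  have : ‖z‖ ≤ ‖w‖ + ‖w - z‖ := by
    have := norm_sub_le w (w - z); simpa using this
  nlinarith [norm_nonneg w, norm_nonneg (w - z), mul_nonneg (norm_nonneg w) (norm_nonneg (w - z))]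

lemma Adm.integrable' {κ : E3 → ℝ} (h : Adm κ) (G : 𝓢(E3, ℝ)) (w : E3) :
    Integrable (fun z => κ z * G (w - z)) := by
  obtain ⟨C, hC, hG⟩ := schwartz_decay G 4
  refine (h.2.norm.const_mul (C * (1 + ‖w‖) ^ 4)).mono' ?_ (ae_of_all _ fun z => ?_)
  · exact (h.1.mul (G.continuous.measurable.comp (by fun_prop))).aestronglyMeasurable
  · rw [norm_mul, norm_mul, norm_inv, norm_pow, Real.norm_of_nonneg (by positivity : 0 ≤ 1 + ‖z‖)]
    have h1 := hG (w - z)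
    have h2 := one_add_sub_inv_le w z
    calc ‖κ z‖ * ‖G (w - z)‖ ≤ ‖κ z‖ * (C * ((1 + ‖w‖) ^ 4 * ((1 + ‖z‖) ^ 4)⁻¹)) := by
          gcongr; exact h1.trans (by gcongr)
      _ = _ := by ring

lemma Adm.integrable {κ : E3 → ℝ} (h : Adm κ) (G : 𝓢(E3, ℝ)) (w : E3) :
    Integrable (fun v => κ (w - v) * G v) := by
  have := (h.integrable' G w).comp_sub_left w
  simpa using this

lemma Adm.cv_bound {κ : E3 → ℝ} (h : Adm κ) (G : 𝓢(E3, ℝ)) :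
    ∃ C, ∀ w, |cv κ G w| ≤ C * (1 + ‖w‖) ^ 4 := by
  obtain ⟨C, hC, hG⟩ := schwartz_decay G 4
  refine ⟨C * ∫ z, ‖κ z * ((1 + ‖z‖) ^ 4)⁻¹‖, fun w => ?_⟩
  rw [cv_eq, ← Real.norm_eq_abs]
  calc _ ≤ ∫ z, (C * (1 + ‖w‖) ^ 4) * ‖κ z * ((1 + ‖z‖) ^ 4)⁻¹‖ := by
        refine norm_integral_le_of_norm_le (h.2.norm.const_mul _) (ae_of_all _ fun z => ?_)
        rw [norm_mul, norm_mul, norm_inv, norm_pow,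
          Real.norm_of_nonneg (by positivity : 0 ≤ 1 + ‖z‖)]
        have h1 := hG (w - z)
        have h2 := one_add_sub_inv_le w z
        calc ‖κ z‖ * ‖G (w - z)‖ ≤ ‖κ z‖ * (C * ((1 + ‖w‖) ^ 4 * ((1 + ‖z‖) ^ 4)⁻¹)) := by
              gcongr; exact h1.trans (by gcongr)
          _ = _ := by ring
    _ = _ := by rw [integral_const_mul]; ring

/-- Differentiation under the integral sign; the derivative falls on the Schwartz factor. -/
lemma Adm.hasFDerivAt_cv {κ : E3 → ℝ} (h : Adm κ) (G : 𝓢(E3, ℝ)) (w : E3) :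
    HasFDerivAt (cv κ G) (∫ z, κ z • fderiv ℝ G (w - z)) w ∧
      Integrable (fun z => κ z • fderiv ℝ G (w - z)) := by
  obtain ⟨C, hC, hG⟩ := schwartz_decay (SchwartzMap.fderivCLM ℝ E3 ℝ G) 4
  simp only [SchwartzMap.fderivCLM_apply] at hG
  have hcont : Continuous (fun x => fderiv ℝ G x) := (SchwartzMap.fderivCLM ℝ E3 ℝ G).continuous
  have hmeas : AEStronglyMeasurable (fun z => κ z • fderiv ℝ G (w - z)) volume :=
    h.1.aestronglyMeasurable.smul
      (hcont.comp (by fun_prop : Continuous fun z : E3 => w - z)).aestronglyMeasurable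
  have hb : ∀ z : E3, ∀ x ∈ Metric.ball w 1, ‖κ z • fderiv ℝ G (x - z)‖ ≤
      (C * (2 + ‖w‖) ^ 4) * ‖κ z * ((1 + ‖z‖) ^ 4)⁻¹‖ := by
    intro z x hx
    rw [norm_smul, norm_mul, norm_inv, norm_pow,
      Real.norm_of_nonneg (by positivity : 0 ≤ 1 + ‖z‖)]
    have h1 := hG (x - z)
    have h2 := one_add_sub_inv_le x z
    have h3 : 1 + ‖x‖ ≤ 2 + ‖w‖ := by
      have : ‖x - w‖ < 1 := by rwa [mem_ball_iff_norm] at hx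
      have := norm_le_norm_add_norm_sub' x w
      linarith
    calc ‖κ z‖ * ‖fderiv ℝ G (x - z)‖ ≤ ‖κ z‖ * (C * ((2 + ‖w‖) ^ 4 * ((1 + ‖z‖) ^ 4)⁻¹)) := by
          gcongr; exact h1.trans (by gcongr; exact h2.trans (by gcongr))
      _ = _ := by ring
  constructor
  · have : cv κ G = fun w => ∫ z, κ z * G (w - z) := funext (cv_eq κ G)
    rw [this]
    refine hasFDerivAt_integral_of_dominated_of_fderiv_le (F' := fun x z => κ z • fderiv ℝ G (x - z))
      (Metric.ball_mem_nhds w one_pos)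
      (Filter.Eventually.of_forall fun x => (h.integrable' G x).aestronglyMeasurable)
      (h.integrable' G w) hmeas (ae_of_all _ hb) (h.2.norm.const_mul _) (ae_of_all _ fun z x _ => ?_)
    have := (G.hasFDerivAt (x - z)).comp x ((hasFDerivAt_id x).sub_const z)
    exact (this.const_mul (κ z))
  · exact (h.2.norm.const_mul _).mono' hmeas
      (ae_of_all _ fun z => hb z w (Metric.mem_ball_self one_pos))

lemma Adm.differentiable_cv {κ : E3 → ℝ} (h : Adm κ) (G : 𝓢(E3, ℝ)) :
    Differentiable ℝ (cv κ G) := fun w => (h.hasFDerivAt_cv G w).1.differentiableAt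

lemma Adm.pd_cv {κ : E3 → ℝ} (h : Adm κ) (G : 𝓢(E3, ℝ)) (i : Fin 3) (w : E3) :
    pd i (cv κ G) w = cv κ (dS i G) w := by
  obtain ⟨h1, h2⟩ := h.hasFDerivAt_cv G w
  rw [pd, h1.fderiv, ContinuousLinearMap.integral_apply h2, cv_eq]
  rfl

lemma schwartz_pow_integrable (ψ : 𝓢(E3, ℝ)) : Integrable (fun v => (1 + ‖v‖) ^ 4 * ‖ψ v‖) := by
  have h : ∀ k : ℕ, Integrable (fun v => ‖v‖ ^ k * ‖ψ v‖) := fun k => ψ.integrable_pow_mul volume k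
  have := ((((h 0).add ((h 1).const_mul 4)).add ((h 2).const_mul 6)).add
    ((h 3).const_mul 4)).add (h 4)
  refine this.congr (ae_of_all _ fun v => ?_)
  simp only [Pi.add_apply]
  ring

/-- `κ ∗ G` grows at most polynomially, so it is integrable against Schwartz functions. -/
lemma Adm.integrable_cv_mul {κ : E3 → ℝ} (h : Adm κ) (G ψ : 𝓢(E3, ℝ)) :
    Integrable (fun w => cv κ G w * ψ w) := by
  obtain ⟨C, hC⟩ := h.cv_bound G
  refine ((schwartz_pow_integrable ψ).const_mul C).mono'
    ((h.differentiable_cv G).continuous.mul ψ.continuous).aestronglyMeasurable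
    (ae_of_all _ fun w => ?_)
  rw [norm_mul, Real.norm_eq_abs]
  calc _ ≤ (C * (1 + ‖w‖) ^ 4) * ‖ψ w‖ := by gcongr; exact hC w
    _ = _ := by ring

lemma Adm.mono {κ κ' : E3 → ℝ} (h : Adm κ) (hm : Measurable κ') (C : ℝ)
    (hle : ∀ z, |κ' z| ≤ C * κ z) : Adm κ' := by
  refine ⟨hm, (h.2.const_mul C).mono' ?_ (ae_of_all _ fun z => ?_)⟩
  · exact (hm.mul (by fun_prop)).aestronglyMeasurable
  · rw [norm_mul, norm_inv, norm_pow, Real.norm_of_nonneg (by positivity : 0 ≤ 1 + ‖z‖),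
      Real.norm_eq_abs, ← mul_assoc]
    gcongr
    exact hle z

lemma adm_inv_norm_sq : Adm (fun z : E3 => (‖z‖ ^ 2)⁻¹) := by
  refine ⟨by fun_prop, ?_⟩
  have h := (integrable_fun_norm_addHaar (volume : Measure E3)
    (f := fun y : ℝ => (y ^ 2)⁻¹ * ((1 + y) ^ 4)⁻¹)).2 ?_
  · exact h
  have h1 : Integrable (fun y : ℝ => (1 + ‖y‖) ^ (-(4:ℝ))) :=
    integrable_one_add_norm (by simp)
  refine (h1.integrableOn (s := Set.Ioi 0)).congr_fun (fun y hy => ?_) measurableSet_Ioi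
  have hy : 0 < y := hy
  simp only [finrank_euclideanSpace, Fintype.card_fin, smul_eq_mul]
  rw [Real.norm_of_nonneg hy.le, Real.rpow_neg (by positivity)]
  norm_num
  field_simp

lemma adm_one : Adm (fun _ : E3 => (1:ℝ)) := by
  refine ⟨by fun_prop, ?_⟩
  have h1 : Integrable (fun y : E3 => (1 + ‖y‖) ^ (-(4:ℝ))) :=
    integrable_one_add_norm (by simp; norm_num)
  refine h1.congr (ae_of_all _ fun y => ?_)
  simp only [one_mul]
  rw [Real.rpow_neg (by positivity)]
  norm_cast

lemma Adm.add {κ κ' : E3 → ℝ} (h : Adm κ) (h' : Adm κ') : Adm (fun z => κ z + κ' z) :=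
  ⟨h.1.add h'.1, (h.2.add h'.2).congr (ae_of_all _ fun z => by simp only [Pi.add_apply]; ring)⟩

lemma adm_inv_norm : Adm (fun z : E3 => ‖z‖⁻¹) := by
  refine (adm_one.add adm_inv_norm_sq).mono (by fun_prop) 1 fun z => ?_
  rw [abs_of_nonneg (by positivity), one_mul, ← inv_pow]
  nlinarith [sq_nonneg (‖z‖⁻¹ - 1)]

lemma integrable_inv_norm_sq_ball :
    Integrable (fun z : E3 => if ‖z‖ ≤ 1 then (‖z‖ ^ 2)⁻¹ else 0) := by
  refine (adm_inv_norm_sq.2.const_mul 16).mono' ?_ (ae_of_all _ fun z => ?_)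
  · exact (Measurable.ite (measurableSet_le (by fun_prop) (by fun_prop)) (by fun_prop)
      (by fun_prop)).aestronglyMeasurable
  · split_ifs with hz
    · rw [Real.norm_of_nonneg (by positivity)]
      have : (1 + ‖z‖) ^ 4 ≤ (1 + 1) ^ 4 := by gcongr
      have h2 : (1:ℝ) ≤ 16 * ((1 + ‖z‖) ^ 4)⁻¹ := by
        rw [← div_eq_mul_inv, le_div_iff₀ (by positivity)]; norm_num at this ⊢; exact this
      nlinarith [inv_nonneg.2 (sq_nonneg ‖z‖)]
    · rw [norm_zero]; positivity

/-! ### The Landau kernel and its divergence -/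

lemma bdd_mul_schwartz {b : E3 → ℝ} (hb : Measurable b) (C : ℝ) (hC : ∀ v, |b v| ≤ C)
    (ψ : 𝓢(E3, ℝ)) : Integrable (fun v => b v * ψ v) :=
  ψ.integrable.bdd_mul hb.aestronglyMeasurable (ae_of_all _ fun v => hC v)

lemma abs_coord_le (z : E3) (i : Fin 3) : |z i| ≤ ‖z‖ := PiLp.norm_apply_le z i

lemma measurable_coord (i : Fin 3) : Measurable (fun z : E3 => z i) := by fun_prop

lemma ae_ne_point (w : E3) : ∀ᵐ v : E3, w - v ≠ 0 := by
  have : ∀ᵐ v : E3, v ≠ w := by simp [ae_iff, measure_singleton]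
  filter_upwards [this] with v hv
  exact sub_ne_zero.2 (Ne.symm hv)

lemma aK_apply (z : E3) (i j : Fin 3) :
    aK z i j = ‖z‖⁻¹ * ((if i = j then (1 : ℝ) else 0) - z i * z j / ‖z‖ ^ 2) := rfl

lemma measurable_aK (i j : Fin 3) : Measurable (fun z : E3 => aK z i j) := by
  simp only [aK_apply]
  fun_prop

lemma abs_aK_le (z : E3) (i j : Fin 3) : |aK z i j| ≤ 2 * ‖z‖⁻¹ := by
  rw [aK_apply, abs_mul, abs_of_nonneg (by positivity : 0 ≤ ‖z‖⁻¹), mul_comm]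
  gcongr
  have h1 : |z i * z j / ‖z‖ ^ 2| ≤ 1 := by
    rw [abs_div, abs_mul, abs_of_nonneg (by positivity : 0 ≤ ‖z‖ ^ 2), sq]
    apply div_le_one_of_le₀ _ (by positivity)
    gcongr <;> apply abs_coord_le
  have h2 : |(if i = j then (1 : ℝ) else 0)| ≤ 1 := by split_ifs <;> simp
  exact (abs_sub _ _).trans (by linarith)

lemma adm_aK (i j : Fin 3) : Adm (fun z => aK z i j) :=
  adm_inv_norm.mono (measurable_aK i j) 2 (fun z => abs_aK_le z i j)

lemma hasDerivAt_coord_line (z : E3) (i j : Fin 3) :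
    HasDerivAt (fun t : ℝ => (z + t • (EuclideanSpace.single j (1:ℝ) : E3)) i)
      (if i = j then 1 else 0) 0 := by
  have h : HasDerivAt (fun t : ℝ => z i + t * (if i = j then 1 else 0))
      (1 * (if i = j then 1 else 0)) 0 :=
    ((hasDerivAt_id (0:ℝ)).mul_const _).const_add _
  rw [one_mul] at h
  refine h.congr_of_eventuallyEq (Filter.Eventually.of_forall fun t => ?_)
  simp

/-- The regularised Landau kernel, with `|z|²` replaced by `|z|² + ε`. -/
noncomputable def aR (ε : ℝ) (i j : Fin 3) (z : E3) : ℝ :=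
  (if i = j then (1 : ℝ) else 0) * (‖z‖ ^ 2 + ε) ^ (-(1/2) : ℝ)
    - z i * z j * (‖z‖ ^ 2 + ε) ^ (-(3/2) : ℝ)

/-- The derivative `∂_j` of the regularised Landau kernel `aR ε i j`. -/
noncomputable def bR (ε : ℝ) (i j : Fin 3) (z : E3) : ℝ :=
  - (if i = j then (1 : ℝ) else 0) * z j * (‖z‖ ^ 2 + ε) ^ (-(3/2) : ℝ)
    - ((if i = j then (1 : ℝ) else 0) * z j + z i) * (‖z‖ ^ 2 + ε) ^ (-(3/2) : ℝ)
    + 3 * z i * z j ^ 2 * (‖z‖ ^ 2 + ε) ^ (-(5/2) : ℝ)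

lemma hasDerivAt_aR {ε : ℝ} (hε : 0 < ε) (i j : Fin 3) (z : E3) :
    HasDerivAt (fun t : ℝ => aR ε i j (z + t • (EuclideanSpace.single j (1:ℝ) : E3)))
      (bR ε i j z) 0 := by
  have hρ := (hasDerivAt_norm_sq_line z j).add_const ε
  have h1 := hρ.rpow_const (p := -(1/2)) (Or.inl (by positivity))
  have h2 := hρ.rpow_const (p := -(3/2)) (Or.inl (by positivity))
  have h3 := (h1.const_mul (if i = j then (1 : ℝ) else 0)).sub
    (((hasDerivAt_coord_line z i j).mul (hasDerivAt_coord_line z j j)).mul h2)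
  refine h3.congr_deriv ?_
  simp only [zero_smul, add_zero, if_true, bR]
  norm_num
  ring_nf

lemma rho_rpow {ε : ℝ} (hε : 0 < ε) (z : E3) :
    ‖z‖ * (‖z‖ ^ 2 + ε) ^ (-(3/2) : ℝ) ≤ (‖z‖ ^ 2 + ε)⁻¹ ∧
    ‖z‖ ^ 3 * (‖z‖ ^ 2 + ε) ^ (-(5/2) : ℝ) ≤ (‖z‖ ^ 2 + ε)⁻¹ ∧
    ‖z‖ ^ 2 * (‖z‖ ^ 2 + ε) ^ (-(3/2) : ℝ) ≤ (‖z‖ ^ 2 + ε) ^ (-(1/2) : ℝ) := by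
  have hρ : 0 < ‖z‖ ^ 2 + ε := by positivity
  set ρ := ‖z‖ ^ 2 + ε with hρd
  have hz : ‖z‖ ≤ ρ ^ ((1:ℝ)/2) := by
    rw [← Real.sqrt_eq_rpow]; apply Real.le_sqrt_of_sq_le; linarith
  have e1 : ρ⁻¹ = ρ ^ ((1:ℝ)/2) * ρ ^ (-(3/2) : ℝ) := by
    rw [← Real.rpow_add hρ, ← Real.rpow_neg_one]; norm_num
  have e3 : (ρ ^ ((1:ℝ)/2)) ^ 2 = ρ := by
    rw [← Real.rpow_natCast, ← Real.rpow_mul hρ.le]; norm_num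
  have e2 : ρ⁻¹ = (ρ ^ ((1:ℝ)/2)) ^ 3 * ρ ^ (-(5/2) : ℝ) := by
    rw [← Real.rpow_natCast, ← Real.rpow_mul hρ.le, ← Real.rpow_add hρ, ← Real.rpow_neg_one]
    norm_num
  have e4 : ρ ^ (-(1/2) : ℝ) = (ρ ^ ((1:ℝ)/2)) ^ 2 * ρ ^ (-(3/2) : ℝ) := by
    rw [← Real.rpow_natCast, ← Real.rpow_mul hρ.le, ← Real.rpow_add hρ]
    norm_num
  refine ⟨?_, ?_, ?_⟩
  · rw [e1]; gcongr
  · rw [e2]; gcongr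
  · rw [e4]; gcongr

lemma abs_aR_le {ε : ℝ} (hε : 0 < ε) (i j : Fin 3) (z : E3) :
    |aR ε i j z| ≤ 2 * (‖z‖ ^ 2 + ε) ^ (-(1/2) : ℝ) := by
  obtain ⟨-, -, h⟩ := rho_rpow hε z
  have hp : 0 ≤ (‖z‖ ^ 2 + ε) ^ (-(1/2) : ℝ) := by positivity
  have hp3 : 0 ≤ (‖z‖ ^ 2 + ε) ^ (-(3/2) : ℝ) := by positivity
  have hi := abs_coord_le z i
  have hj := abs_coord_le z j
  unfold aR
  refine (abs_sub _ _).trans ?_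
  rw [abs_mul, abs_mul, abs_mul, abs_of_nonneg hp, abs_of_nonneg hp3]
  have h2 : |(if i = j then (1 : ℝ) else 0)| ≤ 1 := by split_ifs <;> simp
  have h3 : |z i| * |z j| ≤ ‖z‖ ^ 2 := by rw [sq]; gcongr
  nlinarith [mul_le_mul_of_nonneg_right h2 hp, mul_le_mul_of_nonneg_right h3 hp3]

lemma abs_bR_le {ε : ℝ} (hε : 0 < ε) (i j : Fin 3) (z : E3) :
    |bR ε i j z| ≤ 6 * (‖z‖ ^ 2 + ε)⁻¹ := by
  obtain ⟨h1, h2, -⟩ := rho_rpow hε z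
  have hp5 : 0 ≤ (‖z‖ ^ 2 + ε) ^ (-(5/2) : ℝ) := by positivity
  have hp3 : 0 ≤ (‖z‖ ^ 2 + ε) ^ (-(3/2) : ℝ) := by positivity
  have hi := abs_coord_le z i
  have hj := abs_coord_le z j
  have hd : |(if i = j then (1 : ℝ) else 0)| ≤ 1 := by split_ifs <;> simp
  have t1 : |(if i = j then (1 : ℝ) else 0) * z j| ≤ ‖z‖ := by
    rw [abs_mul]; calc _ ≤ 1 * ‖z‖ := by gcongr
      _ = _ := one_mul _
  have t2 : |(if i = j then (1 : ℝ) else 0) * z j + z i| ≤ 2 * ‖z‖ :=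
    (abs_add_le _ _).trans (by linarith)
  have t3 : |3 * z i * z j ^ 2| ≤ 3 * ‖z‖ ^ 3 := by
    rw [abs_mul, abs_mul, abs_pow]
    calc |(3:ℝ)| * |z i| * |z j| ^ 2 ≤ 3 * ‖z‖ * ‖z‖ ^ 2 := by
          rw [abs_of_pos (by norm_num : (0:ℝ) < 3)]; gcongr
      _ = _ := by ring
  unfold bR
  rw [neg_mul, neg_mul]
  refine (abs_add_le _ _).trans ?_
  refine (add_le_add_left (abs_sub _ _) _).trans ?_
  rw [abs_neg, abs_mul, abs_mul (_ + _), abs_mul (3 * z i * z j ^ 2), abs_of_nonneg hp5,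
    abs_of_nonneg hp3]
  nlinarith [mul_le_mul_of_nonneg_right t1 hp3, mul_le_mul_of_nonneg_right t2 hp3,
    mul_le_mul_of_nonneg_right t3 hp5]

lemma measurable_aR (ε : ℝ) (i j : Fin 3) : Measurable (aR ε i j) := by
  unfold aR; fun_prop

lemma measurable_bR (ε : ℝ) (i j : Fin 3) : Measurable (bR ε i j) := by
  unfold bR; fun_prop

lemma adm_aR {ε : ℝ} (hε : 0 < ε) (i j : Fin 3) : Adm (aR ε i j) := by
  refine adm_one.mono (measurable_aR ε i j) (2 * ε ^ (-(1/2) : ℝ)) fun z => ?_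
  refine (abs_aR_le hε i j z).trans ?_
  rw [mul_one]
  gcongr 2 * ?_
  apply Real.rpow_le_rpow_of_nonpos hε _ (by norm_num)
  nlinarith [sq_nonneg ‖z‖]

lemma adm_bR {ε : ℝ} (hε : 0 < ε) (i j : Fin 3) : Adm (bR ε i j) := by
  refine adm_one.mono (measurable_bR ε i j) (6 * ε⁻¹) fun z => ?_
  refine (abs_bR_le hε i j z).trans ?_
  rw [mul_one]
  gcongr
  nlinarith [sq_nonneg ‖z‖]

/-- Integration by parts moves `∂_j` from `g` to the regularised kernel; the sign from the
integration by parts cancels the one from differentiating `v ↦ w - v`. -/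
lemma cv_aR_dS {ε : ℝ} (hε : 0 < ε) (i j : Fin 3) (g : 𝓢(E3, ℝ)) (w : E3) :
    cv (aR ε i j) (dS j g) w = cv (bR ε i j) g w := by
  have hibp := integral_bilinear_hasLineDerivAt_right_eq_neg_left_of_integrable
    (μ := (volume : Measure E3)) (B := ContinuousLinearMap.mul ℝ ℝ)
    (f := fun v => aR ε i j (w - v)) (f' := fun v => -bR ε i j (w - v)) (g := g) (g' := dS j g)
    (v := EuclideanSpace.single j (1:ℝ))
    (by simpa using ((adm_bR hε i j).integrable g w).neg)
    (by simpa using (adm_aR hε i j).integrable (dS j g) w)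
    (by simpa using (adm_aR hε i j).integrable g w)
    (fun x _ => by
      have h := hasDerivAt_aR hε i j (w - x)
      rw [← neg_zero] at h
      have h2 := h.scomp (0:ℝ) (hasDerivAt_neg (0:ℝ))
      unfold HasLineDerivAt
      refine (h2.congr_deriv (by simp)).congr_of_eventuallyEq (Filter.Eventually.of_forall ?_)
      intro t
      simp only [Function.comp_apply]
      congr 1
      rw [neg_smul]; abel)
    (fun x _ => (g.hasFDerivAt x).hasLineDerivAt _)
  simp only [ContinuousLinearMap.mul_apply', neg_mul, integral_neg, neg_neg] at hibp
  exact hibp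

lemma aR_tendsto (i j : Fin 3) {z : E3} (hz : z ≠ 0) :
    Filter.Tendsto (fun ε => aR ε i j z) (nhdsWithin 0 (Set.Ioi 0)) (nhds (aK z i j)) := by
  have hn : 0 < ‖z‖ := norm_pos_iff.2 hz
  have hρ : Filter.Tendsto (fun ε : ℝ => ‖z‖ ^ 2 + ε) (nhdsWithin 0 (Set.Ioi 0))
      (nhds (‖z‖ ^ 2)) := by
    have : Filter.Tendsto (fun ε : ℝ => ‖z‖ ^ 2 + ε) (nhds 0) (nhds (‖z‖ ^ 2 + 0)) :=
      (continuous_const.add continuous_id).tendsto 0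
    rw [add_zero] at this
    exact this.mono_left nhdsWithin_le_nhds
  have hr : ∀ p : ℝ, Filter.Tendsto (fun ε : ℝ => (‖z‖ ^ 2 + ε) ^ p) (nhdsWithin 0 (Set.Ioi 0))
      (nhds ((‖z‖ ^ 2) ^ p)) := fun p => hρ.rpow_const (Or.inl (by positivity))
  have h := ((hr (-(1/2))).const_mul (if i = j then (1 : ℝ) else 0)).sub
    ((hr (-(3/2))).const_mul (z i * z j))
  unfold aR
  convert h using 2
  rw [aK_apply, ← Real.rpow_natCast ‖z‖ 2, ← Real.rpow_mul hn.le, ← Real.rpow_mul hn.le]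
  have e1 : ‖z‖ ^ (((2:ℕ):ℝ) * (-(1/2))) = ‖z‖⁻¹ := by
    rw [← Real.rpow_neg_one]; norm_num
  have e2 : ‖z‖ ^ (((2:ℕ):ℝ) * (-(3/2))) = (‖z‖ ^ 3)⁻¹ := by
    rw [← Real.rpow_natCast, ← Real.rpow_neg hn.le]; norm_num
  rw [e1, e2, Real.rpow_natCast]
  field_simp

/-- Moving the derivative onto the kernel: `a_ij ∗ ∂_j g` is controlled by `|z|^{-2} ∗ |g|`. -/
lemma abs_cv_aK_dS_le (i j : Fin 3) (g : 𝓢(E3, ℝ)) (w : E3) :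
    |cv (fun z => aK z i j) (dS j g) w| ≤ 6 * ∫ v, (‖w - v‖ ^ 2)⁻¹ * |g v| := by
  have hlim : Filter.Tendsto (fun ε => cv (aR ε i j) (dS j g) w) (nhdsWithin 0 (Set.Ioi 0))
      (nhds (cv (fun z => aK z i j) (dS j g) w)) := by
    unfold cv
    refine tendsto_integral_filter_of_dominated_convergence
      (fun v => 2 * ‖‖w - v‖⁻¹ * dS j g v‖) ?_ ?_
      ((adm_inv_norm.integrable (dS j g) w).norm.const_mul 2) ?_
    · filter_upwards [self_mem_nhdsWithin] with ε hε
      exact ((adm_aR hε i j).integrable (dS j g) w).aestronglyMeasurable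
    · filter_upwards [self_mem_nhdsWithin] with ε hε
      filter_upwards [ae_ne_point w] with v hv
      rw [norm_mul, norm_mul, norm_inv, norm_norm, ← mul_assoc]
      gcongr
      refine (abs_aR_le hε i j _).trans ?_
      gcongr
      have hn : 0 < ‖w - v‖ := norm_pos_iff.2 hv
      have hε : (0:ℝ) < ε := hε
      calc _ ≤ (‖w - v‖ ^ 2) ^ (-(1/2) : ℝ) :=
            Real.rpow_le_rpow_of_nonpos (by positivity) (by linarith) (by norm_num)
        _ = _ := by
          rw [← Real.rpow_natCast, ← Real.rpow_mul hn.le, ← Real.rpow_neg_one]; norm_num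
    · filter_upwards [ae_ne_point w] with v hv
      exact (aR_tendsto i j hv).mul_const _
  refine le_of_tendsto hlim.abs ?_
  filter_upwards [self_mem_nhdsWithin] with ε hε
  rw [cv_aR_dS hε, cv, ← Real.norm_eq_abs, ← integral_const_mul]
  have hInt : Integrable fun v => 6 * ((‖w - v‖ ^ 2)⁻¹ * |g v|) := by
    refine ((adm_inv_norm_sq.integrable g w).norm.const_mul 6).congr (ae_of_all _ fun v => ?_)
    simp
  refine norm_integral_le_of_norm_le hInt ?_
  filter_upwards [ae_ne_point w] with v hv
  have hn : 0 < ‖w - v‖ := norm_pos_iff.2 hv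
  have hε : (0:ℝ) < ε := hε
  rw [norm_mul, ← mul_assoc, Real.norm_eq_abs (g v), Real.norm_eq_abs]
  gcongr
  refine (abs_bR_le hε i j _).trans ?_
  gcongr
  linarith

/-! ### Hardy's inequality -/

lemma hasDerivAt_hardyField {ε : ℝ} (hε : 0 < ε) (i : Fin 3) (z : E3) :
    HasDerivAt (fun t : ℝ => (z + t • (EuclideanSpace.single i (1:ℝ) : E3)) i *
        (‖z + t • (EuclideanSpace.single i (1:ℝ) : E3)‖ ^ 2 + ε)⁻¹)
      ((‖z‖ ^ 2 + ε)⁻¹ - 2 * z i ^ 2 * ((‖z‖ ^ 2 + ε)⁻¹) ^ 2) 0 := by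
  have hρ := (hasDerivAt_norm_sq_line z i).add_const ε
  have h := (hasDerivAt_coord_line z i i).mul (hρ.inv (by positivity))
  refine h.congr_deriv ?_
  have : 0 < ‖z‖ ^ 2 + ε := by positivity
  simp only [Pi.inv_apply, zero_smul, add_zero, if_true]
  field_simp
  ring

/-- The `i`-th component of the integration by parts behind Hardy's inequality, with the
regularised field `z / (|z|² + ε)`. -/
lemma hardy_ibp {ε : ℝ} (hε : 0 < ε) (i : Fin 3) (H : 𝓢(E3, ℝ)) (x : E3) :
    Integrable (fun v => ((‖v - x‖ ^ 2 + ε)⁻¹ - 2 * (v - x) i ^ 2 * ((‖v - x‖ ^ 2 + ε)⁻¹) ^ 2) *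
        H v ^ 2 + (v - x) i * (‖v - x‖ ^ 2 + ε)⁻¹ * (2 * H v * dS i H v)) ∧
    ∫ v, (((‖v - x‖ ^ 2 + ε)⁻¹ - 2 * (v - x) i ^ 2 * ((‖v - x‖ ^ 2 + ε)⁻¹) ^ 2) *
        H v ^ 2 + (v - x) i * (‖v - x‖ ^ 2 + ε)⁻¹ * (2 * H v * dS i H v)) = 0 := by
  set f : E3 → ℝ := fun v => (v - x) i * (‖v - x‖ ^ 2 + ε)⁻¹ with hf
  set f' : E3 → ℝ := fun v =>
    (‖v - x‖ ^ 2 + ε)⁻¹ - 2 * (v - x) i ^ 2 * ((‖v - x‖ ^ 2 + ε)⁻¹) ^ 2 with hf'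
  have mf : Measurable f := by
    have := (measurable_coord i).comp (measurable_id.sub_const x)
    exact this.mul (by fun_prop)
  have mf' : Measurable f' := by
    have := (measurable_coord i).comp (measurable_id.sub_const x)
    exact Measurable.sub (by fun_prop) (((this.pow_const 2).const_mul 2).mul (by fun_prop))
  have bf : ∀ v, |f v| ≤ 1 + ε⁻¹ := by
    intro v
    have h0 : 0 < ‖v - x‖ ^ 2 + ε := by positivity
    rw [hf, abs_mul, abs_of_nonneg (by positivity : 0 ≤ (‖v - x‖ ^ 2 + ε)⁻¹),
      ← div_eq_mul_inv, div_le_iff₀ h0]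
    have h1 := abs_coord_le (v - x) i
    have h2 : (1 + ε⁻¹) * (‖v - x‖ ^ 2 + ε) = ‖v - x‖ ^ 2 + ε + ε⁻¹ * ‖v - x‖ ^ 2 + 1 := by
      field_simp
      ring
    rw [h2]
    have : 0 ≤ ε⁻¹ * ‖v - x‖ ^ 2 := by positivity
    nlinarith [sq_nonneg (‖v - x‖ - 1)]
  have bf' : ∀ v, |f' v| ≤ 3 * ε⁻¹ := by
    intro v
    have h0 : 0 < ‖v - x‖ ^ 2 + ε := by positivity
    have h1 : (v - x) i ^ 2 ≤ ‖v - x‖ ^ 2 := sq_le_sq' (by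
      linarith [abs_coord_le (v - x) i, neg_abs_le ((v - x) i)]) ((le_abs_self _).trans
        (abs_coord_le _ _))
    have h2 : (‖v - x‖ ^ 2 + ε)⁻¹ ≤ ε⁻¹ := by
      gcongr; nlinarith [sq_nonneg ‖v - x‖]
    have h3 : (v - x) i ^ 2 * (‖v - x‖ ^ 2 + ε)⁻¹ ≤ 1 := by
      rw [← div_eq_mul_inv, div_le_one h0]; linarith
    have h4 : 0 < (‖v - x‖ ^ 2 + ε)⁻¹ := by positivity
    have h5 : f' v = (‖v - x‖ ^ 2 + ε)⁻¹ -
      2 * ((v - x) i ^ 2 * (‖v - x‖ ^ 2 + ε)⁻¹) * (‖v - x‖ ^ 2 + ε)⁻¹ := by rw [hf']; ring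
    have h6 : 0 ≤ (v - x) i ^ 2 * (‖v - x‖ ^ 2 + ε)⁻¹ := by positivity
    rw [h5, abs_le]
    constructor <;> nlinarith
  have i1 := bdd_mul_schwartz mf' _ bf' (mS H H)
  have i2 := bdd_mul_schwartz mf _ bf (dS i (mS H H))
  have i3 := bdd_mul_schwartz mf _ bf (mS H H)
  have hd : ∀ v, dS i (mS H H) v = 2 * H v * dS i H v := by
    intro v
    have : ⇑(mS H H) = fun v => H v * H v := funext (mS_apply H H)
    rw [dS_apply, dS_apply, pd, this, fderiv_fun_mul H.differentiableAt H.differentiableAt]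
    simp [pd]
    ring
  have hibp := integral_bilinear_hasLineDerivAt_right_eq_neg_left_of_integrable
    (μ := (volume : Measure E3)) (B := ContinuousLinearMap.mul ℝ ℝ)
    (f := f) (f' := f') (g := mS H H) (g' := dS i (mS H H))
    (v := EuclideanSpace.single i (1:ℝ))
    i1 i2 i3
    (fun v _ => by
      have h := hasDerivAt_hardyField hε i (v - x)
      refine h.congr_of_eventuallyEq (Filter.Eventually.of_forall fun t => ?_)
      simp only [hf]
      rw [add_sub_right_comm])
    (fun v _ => ((mS H H).hasFDerivAt v).hasLineDerivAt _)
  simp only [ContinuousLinearMap.mul_apply'] at hibp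
  have e : ∀ v, f' v * H v ^ 2 + f v * (2 * H v * dS i H v) =
      f' v * mS H H v + f v * dS i (mS H H) v := by
    intro v; rw [hd, mS_apply]; ring
  constructor
  · exact (i1.add i2).congr (ae_of_all _ fun v => (e v).symm)
  · calc _ = ∫ v, (f' v * mS H H v + f v * dS i (mS H H) v) :=
          integral_congr_ae (ae_of_all _ e)
      _ = 0 := by rw [integral_add i1 i2, hibp]; ring

lemma integrable_grad_sq (H : 𝓢(E3, ℝ)) : Integrable (fun v => ∑ i, dS i H v ^ 2) := by
  refine integrable_finsetSum _ fun i _ => ?_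
  refine (mS (dS i H) (dS i H)).integrable.congr (ae_of_all _ fun v => ?_)
  simp only [mS_apply]; ring

/-- Hardy's inequality with `|z|²` regularised to `|z|² + ε`. -/
lemma hardy_reg {ε : ℝ} (hε : 0 < ε) (H : 𝓢(E3, ℝ)) (x : E3) :
    ∫ v, (‖v - x‖ ^ 2 + ε)⁻¹ * H v ^ 2 ≤ 4 * ∫ v, ∑ i, dS i H v ^ 2 := by
  have hi := fun i => hardy_ibp hε i H x
  have h0 : ∫ v, ∑ i : Fin 3,
      (((‖v - x‖ ^ 2 + ε)⁻¹ - 2 * (v - x) i ^ 2 * ((‖v - x‖ ^ 2 + ε)⁻¹) ^ 2) *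
        H v ^ 2 + (v - x) i * (‖v - x‖ ^ 2 + ε)⁻¹ * (2 * H v * dS i H v)) = 0 := by
    rw [integral_finsetSum _ fun i _ => (hi i).1]
    exact Finset.sum_eq_zero fun i _ => (hi i).2
  have hint1 : Integrable (fun v => (‖v - x‖ ^ 2 + ε)⁻¹ * H v ^ 2) := by
    refine (bdd_mul_schwartz (b := fun v => (‖v - x‖ ^ 2 + ε)⁻¹) (by fun_prop) ε⁻¹ (fun v => ?_)
      (mS H H)).congr (ae_of_all _ fun v => ?_)
    · rw [abs_of_nonneg (by positivity)]
      gcongr; nlinarith [sq_nonneg ‖v - x‖]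
    · simp only [mS_apply]; ring
  have hint2 := integrable_grad_sq H
  have hle : ∫ v, ((1/2) * ((‖v - x‖ ^ 2 + ε)⁻¹ * H v ^ 2) - 2 * ∑ i, dS i H v ^ 2) ≤ 0 := by
    rw [← h0]
    refine integral_mono ((hint1.const_mul _).sub (hint2.const_mul _))
      (integrable_finsetSum _ fun i _ => (hi i).1) fun v => ?_
    simp only [Fin.sum_univ_three]
    have hρ : 0 < ‖v - x‖ ^ 2 + ε := by positivity
    have hn := norm_sq_eq (v - x)
    set r := (‖v - x‖ ^ 2 + ε)⁻¹ with hr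
    have hr0 : 0 < r := by positivity
    have hr1 : ((v - x) 0 ^ 2 + (v - x) 1 ^ 2 + (v - x) 2 ^ 2) * r ^ 2 ≤ r := by
      rw [← hn, hr]
      have : (‖v - x‖ ^ 2 + ε) * (‖v - x‖ ^ 2 + ε)⁻¹ ^ 2 = (‖v - x‖ ^ 2 + ε)⁻¹ := by field_simp
      calc _ ≤ (‖v - x‖ ^ 2 + ε) * (‖v - x‖ ^ 2 + ε)⁻¹ ^ 2 := by gcongr; linarith
        _ = _ := this
    have hr2 := mul_le_mul_of_nonneg_right hr1 (sq_nonneg (H v))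
    nlinarith [sq_nonneg ((v - x) 0 * r * H v + 2 * dS 0 H v),
      sq_nonneg ((v - x) 1 * r * H v + 2 * dS 1 H v),
      sq_nonneg ((v - x) 2 * r * H v + 2 * dS 2 H v)]
  rw [integral_sub (hint1.const_mul _) (hint2.const_mul _), integral_const_mul,
    integral_const_mul] at hle
  linarith

/-- Hardy's inequality in `ℝ³` with pole at `x`. -/
lemma hardy (H : 𝓢(E3, ℝ)) (x : E3) :
    Integrable (fun v => (‖v - x‖ ^ 2)⁻¹ * H v ^ 2) ∧
    ∫ v, (‖v - x‖ ^ 2)⁻¹ * H v ^ 2 ≤ 4 * ∫ v, ∑ i, dS i H v ^ 2 := by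
  have hInt : Integrable (fun v => (‖v - x‖ ^ 2)⁻¹ * H v ^ 2) := by
    refine (adm_inv_norm_sq.integrable (mS H H) x).congr (ae_of_all _ fun v => ?_)
    simp only [mS_apply]
    rw [norm_sub_rev, ← sq]
  refine ⟨hInt, ?_⟩
  have hlim : Filter.Tendsto (fun ε : ℝ => ∫ v, (‖v - x‖ ^ 2 + ε)⁻¹ * H v ^ 2)
      (nhdsWithin 0 (Set.Ioi 0)) (nhds (∫ v, (‖v - x‖ ^ 2)⁻¹ * H v ^ 2)) := by
    refine tendsto_integral_filter_of_dominated_convergence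
      (fun v => (‖v - x‖ ^ 2)⁻¹ * H v ^ 2) ?_ ?_ hInt ?_
    · refine Filter.Eventually.of_forall fun ε => ?_
      exact (Measurable.mul (by fun_prop) (H.continuous.measurable.pow_const 2)).aestronglyMeasurable
    · filter_upwards [self_mem_nhdsWithin] with ε hε
      filter_upwards [ae_ne_point x] with v hv
      have hn : 0 < ‖v - x‖ := by rw [norm_sub_rev]; exact norm_pos_iff.2 hv
      have hε : (0:ℝ) < ε := hε
      rw [Real.norm_of_nonneg (by positivity)]
      gcongr
      linarith
    · filter_upwards [ae_ne_point x] with v hv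
      have hn : 0 < ‖v - x‖ := by rw [norm_sub_rev]; exact norm_pos_iff.2 hv
      have : Filter.Tendsto (fun ε : ℝ => ‖v - x‖ ^ 2 + ε) (nhds 0) (nhds (‖v - x‖ ^ 2 + 0)) :=
        (continuous_const.add continuous_id).tendsto 0
      rw [add_zero] at this
      exact ((this.mono_left nhdsWithin_le_nhds).inv₀ (by positivity)).mul_const _
  refine le_of_tendsto hlim ?_
  filter_upwards [self_mem_nhdsWithin] with ε hε
  exact hardy_reg hε H x

/-! ### Integration by parts in the pairing -/

/-- Integration by parts for the product of a convolution and two Schwartz functions. -/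
lemma mul_cv_ibp {κ : E3 → ℝ} (h : Adm κ) (i : Fin 3) (G u φ : 𝓢(E3, ℝ)) :
    Integrable (fun w => pd i (fun w => cv κ G w * u w) w * φ w) ∧
    Integrable (fun w => cv κ G w * u w * dS i φ w) ∧
    ∫ w, pd i (fun w => cv κ G w * u w) w * φ w = -∫ w, cv κ G w * u w * dS i φ w := by
  have hdT : Differentiable ℝ (fun w => cv κ G w * u w) :=
    (h.differentiable_cv G).mul u.differentiable
  have hpd : ∀ w, pd i (fun w => cv κ G w * u w) w =
      cv κ (dS i G) w * u w + cv κ G w * dS i u w := by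
    intro w
    rw [← h.pd_cv, dS_apply]
    simp only [pd]
    rw [fderiv_fun_mul (h.differentiable_cv G w) (u.differentiableAt)]
    simp
    ring
  have i1 : Integrable (fun w => pd i (fun w => cv κ G w * u w) w * φ w) := by
    refine ((h.integrable_cv_mul (dS i G) (mS u φ)).add
      (h.integrable_cv_mul G (mS (dS i u) φ))).congr (ae_of_all _ fun w => ?_)
    simp only [Pi.add_apply, mS_apply, hpd]; ring
  have i2 : Integrable (fun w => cv κ G w * u w * dS i φ w) := by
    refine (h.integrable_cv_mul G (mS u (dS i φ))).congr (ae_of_all _ fun w => ?_)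
    simp only [mS_apply]; ring
  have i3 : Integrable (fun w => cv κ G w * u w * φ w) := by
    refine (h.integrable_cv_mul G (mS u φ)).congr (ae_of_all _ fun w => ?_)
    simp only [mS_apply]; ring
  refine ⟨i1, i2, ?_⟩
  have := integral_bilinear_hasLineDerivAt_right_eq_neg_left_of_integrable
    (μ := (volume : Measure E3)) (B := ContinuousLinearMap.mul ℝ ℝ)
    (f := fun w => cv κ G w * u w) (f' := pd i (fun w => cv κ G w * u w)) (g := φ) (g' := dS i φ)
    (v := EuclideanSpace.single i (1:ℝ)) i1 i2 i3
    (fun v _ => ((hdT v).hasFDerivAt).hasLineDerivAt _)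
    (fun v _ => (φ.hasFDerivAt v).hasLineDerivAt _)
  simp only [ContinuousLinearMap.mul_apply'] at this
  rw [this, neg_neg]

/-- The integrand defining `Q(g,f)` splits into convolutions of the kernel with `g` and `∇g`. -/
lemma flux_eq (g f : 𝓢(E3, ℝ)) (i : Fin 3) (w : E3) :
    ∫ vs : E3, ∑ j : Fin 3, aK (w - vs) i j * (g vs * pd j f w - pd j g vs * f w) =
    ∑ j, (cv (fun z => aK z i j) g w * dS j f w - cv (fun z => aK z i j) (dS j g) w * f w) := by
  have e : ∀ j vs, aK (w - vs) i j * (g vs * pd j f w - pd j g vs * f w) =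
      aK (w - vs) i j * g vs * dS j f w - aK (w - vs) i j * dS j g vs * f w := by
    intro j vs; simp only [dS_apply]; ring
  simp_rw [e]
  have a1 := fun j => ((adm_aK i j).integrable g w).mul_const (dS j f w)
  have a2 := fun j => ((adm_aK i j).integrable (dS j g) w).mul_const (f w)
  have a3 : ∀ j, Integrable (fun vs => aK (w - vs) i j * g vs * dS j f w -
      aK (w - vs) i j * dS j g vs * f w) := fun j => (a1 j).sub (a2 j)
  rw [integral_finsetSum _ fun j _ => a3 j]
  refine Finset.sum_congr rfl fun j _ => ?_
  rw [integral_sub (a1 j) (a2 j), integral_mul_const, integral_mul_const]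
  rfl

/-- `⟨Q(g,f), φ⟩` equals minus the integral of the flux against `∇φ`. -/
lemma pairing_eq (g f φ : 𝓢(E3, ℝ)) :
    Integrable (fun w => ∑ i, ∑ j, (cv (fun z => aK z i j) g w * dS j f w -
      cv (fun z => aK z i j) (dS j g) w * f w) * dS i φ w) ∧
    pairL (landauQ g f) φ = -∫ w, ∑ i, ∑ j, (cv (fun z => aK z i j) g w * dS j f w -
      cv (fun z => aK z i j) (dS j g) w * f w) * dS i φ w := by
  have m1 := fun i j => mul_cv_ibp (adm_aK i j) i g (dS j f) φ
  have m2 := fun i j => mul_cv_ibp (adm_aK i j) i (dS j g) f φ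
  have eQ : ∀ w, landauQ g f w * φ w = ∑ i, ∑ j,
      (pd i (fun w => cv (fun z => aK z i j) g w * dS j f w) w * φ w -
       pd i (fun w => cv (fun z => aK z i j) (dS j g) w * f w) w * φ w) := by
    intro w
    unfold landauQ
    simp_rw [flux_eq]
    rw [Finset.sum_mul]
    refine Finset.sum_congr rfl fun i _ => ?_
    have d1 : ∀ j, DifferentiableAt ℝ (fun w => cv (fun z => aK z i j) g w * dS j f w) w :=
      fun j => (((adm_aK i j).differentiable_cv g).mul (dS j f).differentiable) w
    have d2 : ∀ j, DifferentiableAt ℝ (fun w => cv (fun z => aK z i j) (dS j g) w * f w) w :=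
      fun j => (((adm_aK i j).differentiable_cv (dS j g)).mul f.differentiable) w
    have d3 : ∀ j, DifferentiableAt ℝ (fun w => cv (fun z => aK z i j) g w * dS j f w -
      cv (fun z => aK z i j) (dS j g) w * f w) w := fun j => (d1 j).sub (d2 j)
    rw [fderiv_fun_sum fun j _ => d3 j]
    rw [_root_.sum_apply, Finset.sum_mul]
    refine Finset.sum_congr rfl fun j _ => ?_
    rw [fderiv_fun_sub (d1 j) (d2 j)]
    simp only [_root_.sub_apply, sub_mul, pd]
  have hI : ∀ i j, Integrable (fun w => (cv (fun z => aK z i j) g w * dS j f w -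
      cv (fun z => aK z i j) (dS j g) w * f w) * dS i φ w) := fun i j => by
    simp_rw [sub_mul]
    exact (m1 i j).2.1.sub (m2 i j).2.1
  have hI' : ∀ i j, Integrable (fun w =>
      pd i (fun w => cv (fun z => aK z i j) g w * dS j f w) w * φ w -
       pd i (fun w => cv (fun z => aK z i j) (dS j g) w * f w) w * φ w) :=
    fun i j => (m1 i j).1.sub (m2 i j).1
  refine ⟨integrable_finsetSum _ fun i _ => integrable_finsetSum _ fun j _ => hI i j, ?_⟩
  unfold pairL
  simp_rw [eQ]
  rw [integral_finsetSum _ fun i _ => integrable_finsetSum _ fun j _ => hI' i j,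
    integral_finsetSum _ fun i _ => integrable_finsetSum _ fun j _ => hI i j,
    ← Finset.sum_neg_distrib]
  refine Finset.sum_congr rfl fun i _ => ?_
  rw [integral_finsetSum _ fun j _ => hI' i j,
    integral_finsetSum _ fun j _ => hI i j, ← Finset.sum_neg_distrib]
  refine Finset.sum_congr rfl fun j _ => ?_
  rw [integral_sub (m1 i j).1 (m2 i j).1, (m1 i j).2.2, (m2 i j).2.2]
  simp_rw [sub_mul]
  rw [integral_sub (m1 i j).2.1 (m2 i j).2.1]
  ring

/-! ### Pointwise kernel bounds -/

/-- The squared length `|v × ξ|²` of the cross product. -/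
def crossSq (v : E3) (ξ : Fin 3 → ℝ) : ℝ :=
  (v 0 * ξ 1 - v 1 * ξ 0) ^ 2 + (v 0 * ξ 2 - v 2 * ξ 0) ^ 2 + (v 1 * ξ 2 - v 2 * ξ 1) ^ 2

/-- The squared Euclidean length `|ξ|²`. -/
def sqN (ξ : Fin 3 → ℝ) : ℝ := ξ 0 ^ 2 + ξ 1 ^ 2 + ξ 2 ^ 2

lemma crossSq_nonneg (v : E3) (ξ : Fin 3 → ℝ) : 0 ≤ crossSq v ξ := by unfold crossSq; positivity

lemma sqN_nonneg (ξ : Fin 3 → ℝ) : 0 ≤ sqN ξ := by unfold sqN; positivity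

lemma crossSq_le (v : E3) (ξ : Fin 3 → ℝ) : crossSq v ξ ≤ ‖v‖ ^ 2 * sqN ξ := by
  rw [norm_sq_eq]; unfold crossSq sqN
  nlinarith [sq_nonneg (v 0 * ξ 0 + v 1 * ξ 1 + v 2 * ξ 2)]

lemma crossSq_sub_le (v w : E3) (ξ : Fin 3 → ℝ) :
    crossSq (v - w) ξ ≤ 2 * (crossSq v ξ + crossSq w ξ) := by
  unfold crossSq
  simp only [PiLp.sub_apply]
  nlinarith [sq_nonneg (v 0 * ξ 1 - v 1 * ξ 0 + (w 0 * ξ 1 - w 1 * ξ 0)),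
    sq_nonneg (v 0 * ξ 2 - v 2 * ξ 0 + (w 0 * ξ 2 - w 2 * ξ 0)),
    sq_nonneg (v 1 * ξ 2 - v 2 * ξ 1 + (w 1 * ξ 2 - w 2 * ξ 1))]

/-- The Landau quadratic form via Lagrange's identity. At `z = 0` both sides vanish because
`0⁻¹ = 0`. -/
lemma qform_eq (z : E3) (ξ : Fin 3 → ℝ) :
    ∑ i, ∑ j, aK z i j * (ξ i * ξ j) = (‖z‖ ^ 3)⁻¹ * crossSq z ξ := by
  simp only [Fin.sum_univ_three, aK_apply]
  by_cases hz : ‖z‖ = 0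
  · simp [hz]
  have e : ∀ x : ℝ, ‖z‖⁻¹ * x = (‖z‖ ^ 3)⁻¹ * (‖z‖ ^ 2 * x) := fun x => by
    field_simp
  have e2 : ∀ x : ℝ, ‖z‖ ^ 2 * (x / ‖z‖ ^ 2) = x := fun x => by field_simp
  simp only [e, mul_sub, e2]
  rw [norm_sq_eq]
  unfold crossSq
  simp
  ring

/-- Far-field alternative: either `⟨v⟩` is controlled by `⟨v*⟩`, or `|v - v*|` is comparable
with `⟨v⟩`. -/
lemma jap_alt (v vs : E3) : jap v ≤ 4 * jap vs ∨ jap v / 2 ≤ ‖v - vs‖ := by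
  by_cases h : jap v ≤ 4 * jap vs
  · exact Or.inl h
  · right
    have h1 := jap_le v
    have h2 := norm_le_jap vs
    have h3 := one_le_jap vs
    have h4 : ‖v‖ ≤ ‖v - vs‖ + ‖vs‖ := by simpa using norm_add_le (v - vs) vs
    push Not at h
    linarith

lemma jap_ratio {v vs : E3} (h : jap v ≤ 4 * jap vs) : 1 ≤ 64 * jap vs ^ 3 * (jap v ^ 3)⁻¹ := by
  have := jap_pos v
  rw [← div_eq_mul_inv, one_le_div (by positivity)]
  calc jap v ^ 3 ≤ (4 * jap vs) ^ 3 := by gcongr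
    _ = _ := by ring

/-- The Landau quadratic form is controlled by the anisotropic weight at the price of `⟨v*⟩³`. -/
lemma qform_bound (v vs : E3) (ξ : Fin 3 → ℝ) :
    (‖v - vs‖ ^ 3)⁻¹ * crossSq (v - vs) ξ ≤
      64 * ((1 + ‖v - vs‖⁻¹) * jap vs ^ 3) * ((jap v ^ 3)⁻¹ * (sqN ξ + crossSq v ξ)) := by
  have hw := jap_pos v
  have hws := one_le_jap vs
  have hs := sqN_nonneg ξ
  have hc := crossSq_nonneg v ξ
  rcases jap_alt v vs with h | h
  · have h1 := jap_ratio h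
    have h2 : (‖v - vs‖ ^ 3)⁻¹ * crossSq (v - vs) ξ ≤ ‖v - vs‖⁻¹ * sqN ξ := by
      by_cases hz : ‖v - vs‖ = 0
      · simp [hz]
      have : 0 < ‖v - vs‖ := lt_of_le_of_ne (norm_nonneg _) (Ne.symm hz)
      rw [inv_mul_le_iff₀ (by positivity)]
      calc _ ≤ ‖v - vs‖ ^ 2 * sqN ξ := crossSq_le _ _
        _ = _ := by field_simp
    calc _ ≤ 1 * (‖v - vs‖⁻¹ * sqN ξ) := by rw [one_mul]; exact h2
      _ ≤ (64 * jap vs ^ 3 * (jap v ^ 3)⁻¹) * ((1 + ‖v - vs‖⁻¹) * (sqN ξ + crossSq v ξ)) := by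
        gcongr <;> linarith
      _ = _ := by ring
  · have hz : 0 < ‖v - vs‖ := by linarith
    have h1 : (‖v - vs‖ ^ 3)⁻¹ ≤ 8 * (jap v ^ 3)⁻¹ := by
      calc (‖v - vs‖ ^ 3)⁻¹ ≤ ((jap v / 2) ^ 3)⁻¹ := by gcongr
        _ = _ := by rw [div_pow, inv_div]; ring
    have h2 : crossSq (v - vs) ξ ≤ 2 * jap vs ^ 3 * (sqN ξ + crossSq v ξ) := by
      have a := crossSq_sub_le v vs ξ
      have b := crossSq_le vs ξ
      have c : ‖vs‖ ^ 2 ≤ jap vs ^ 3 := by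
        have := jap_sq vs
        nlinarith [sq_nonneg (jap vs)]
      have d : 1 ≤ jap vs ^ 3 := one_le_pow₀ hws
      nlinarith [mul_le_mul_of_nonneg_right c hs, mul_le_mul_of_nonneg_right d hc]
    calc _ ≤ (8 * (jap v ^ 3)⁻¹) * (2 * jap vs ^ 3 * (sqN ξ + crossSq v ξ)) := by
          gcongr; exact crossSq_nonneg _ _
      _ = 16 * (1 * jap vs ^ 3) * ((jap v ^ 3)⁻¹ * (sqN ξ + crossSq v ξ)) := by ring
      _ ≤ _ := by
          gcongr
          · norm_num
          · linarith [inv_nonneg.2 hz.le]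

/-- The truncated kernel `|z|⁻² 1_{|z| ≤ 1}`. -/
noncomputable def kloc (z : E3) : ℝ := if ‖z‖ ≤ 1 then (‖z‖ ^ 2)⁻¹ else 0

lemma kloc_nonneg (z : E3) : 0 ≤ kloc z := by unfold kloc; split_ifs <;> positivity

lemma kloc_le (z : E3) : kloc z ≤ (‖z‖ ^ 2)⁻¹ := by
  unfold kloc; split_ifs
  · exact le_rfl
  · positivity

lemma inv_sq_le_kloc (z : E3) : (‖z‖ ^ 2)⁻¹ ≤ 1 + kloc z := by
  unfold kloc
  split_ifs with h
  · linarith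
  · push Not at h
    rw [add_zero]
    exact inv_le_one_of_one_le₀ (one_le_pow₀ h.le)

lemma measurable_kloc : Measurable kloc := by
  unfold kloc
  exact Measurable.ite (measurableSet_le measurable_norm measurable_const) (by fun_prop)
    measurable_const

lemma adm_kloc : Adm kloc :=
  adm_inv_norm_sq.mono measurable_kloc 1 fun z => by
    rw [abs_of_nonneg (kloc_nonneg z), one_mul]; exact kloc_le z

/-- The kernel `|v-v*|⁻²` splits into a regular part of weight `⟨v⟩⁻²` and a local singular part of
weight `⟨v⟩⁻³`, at the price of `⟨v*⟩³`. -/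
lemma inv_sq_bound (v vs : E3) : (‖v - vs‖ ^ 2)⁻¹ ≤
    64 * jap vs ^ 3 * ((jap v ^ 2)⁻¹ + (jap v ^ 3)⁻¹ * kloc (v - vs)) := by
  have hw := jap_pos v
  have hws := one_le_jap vs
  have hk := kloc_nonneg (v - vs)
  have d : 1 ≤ jap vs ^ 3 := one_le_pow₀ hws
  rcases jap_alt v vs with h | h
  · have h1 := jap_ratio h
    have h2 : 1 ≤ 64 * jap vs ^ 3 * (jap v ^ 2)⁻¹ := by
      rw [← div_eq_mul_inv, one_le_div (by positivity)]
      calc jap v ^ 2 ≤ (4 * jap vs) ^ 2 := by gcongr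
        _ ≤ 64 * jap vs ^ 3 := by nlinarith [sq_nonneg (jap vs)]
    have h3 := inv_sq_le_kloc (v - vs)
    calc _ ≤ 1 * 1 + 1 * kloc (v - vs) := by linarith
      _ ≤ (64 * jap vs ^ 3 * (jap v ^ 2)⁻¹) * 1 +
          (64 * jap vs ^ 3 * (jap v ^ 3)⁻¹) * kloc (v - vs) := by gcongr
      _ = _ := by ring
  · have hz : 0 < ‖v - vs‖ := by linarith
    calc (‖v - vs‖ ^ 2)⁻¹ ≤ ((jap v / 2) ^ 2)⁻¹ := by gcongr
      _ = 4 * 1 * ((jap v ^ 2)⁻¹ + 0) := by rw [div_pow, inv_div]; ring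
      _ ≤ _ := by gcongr; · norm_num
                  · positivity

lemma integrable_jap_rpow {s : ℝ} (hs : 3 < s) : Integrable (fun v : E3 => jap v ^ (-s)) := by
  simp_rw [jap_rpow_eq]
  exact integrable_rpow_neg_one_add_norm_sq (by simpa using hs)

/-- Weighted convolution bound: for `k > 9/2` the weight `⟨v*⟩^{3-k}` is square integrable, so
`∫ ⟨v*⟩³ (1 + |v-v*|⁻¹) |g*|` is bounded by `‖g‖_{L²_k}`. -/
lemma conv_bound {k : ℝ} (hk : 9 / 2 < k) : ∃ K > 0, ∀ (g : 𝓢(E3, ℝ)) (N : ℝ), 0 < N →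
    ∫ v, wS k g v ^ 2 ≤ N ^ 2 → ∀ v : E3,
    ∫ vs, (1 + ‖v - vs‖⁻¹) * |wS 3 g vs| ≤ K * N := by
  set I1 := ∫ v : E3, jap v ^ (-(2 * k - 6)) with hI1
  set I2 := ∫ z : E3, kloc z with hI2
  have i1 := integrable_jap_rpow (s := 2 * k - 6) (by linarith)
  have i2 : Integrable kloc := integrable_inv_norm_sq_ball
  have p1 : 0 ≤ I1 := integral_nonneg fun v => (rpow_pos_of_pos (jap_pos v) _).le
  have p2 : 0 ≤ I2 := integral_nonneg kloc_nonneg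
  refine ⟨1 + 2 * I1 + I2, by positivity, fun g N hN hg v => ?_⟩
  have i3 : Integrable (fun v => wS k g v ^ 2) :=
    (mS (wS k g) (wS k g)).integrable.congr (ae_of_all _ fun v => by simp only [mS_apply]; ring)
  have i2' : Integrable (fun vs => kloc (v - vs)) := i2.comp_sub_left v
  have i4 : Integrable (fun vs => 2 * jap vs ^ (-(2 * k - 6)) + kloc (v - vs)) :=
    (i1.const_mul 2).add i2'
  have hpt : ∀ vs, (1 + ‖v - vs‖⁻¹) * |wS 3 g vs| ≤
      (2 * N)⁻¹ * wS k g vs ^ 2 + N * (2 * jap vs ^ (-(2 * k - 6)) + kloc (v - vs)) := by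
    intro vs
    have hw := jap_pos vs
    have e1 : |wS 3 g vs| = |wS k g vs| * jap vs ^ (3 - k) := by
      rw [wS_apply, wS_apply, abs_mul, abs_mul, abs_of_pos (rpow_pos_of_pos hw _),
        abs_of_pos (rpow_pos_of_pos hw _), mul_assoc, ← rpow_add hw]
      congr 2; ring
    have e2 : jap vs ^ (-(2 * k - 6)) = (jap vs ^ (3 - k)) ^ 2 := by
      rw [← rpow_natCast, ← rpow_mul hw.le]; congr 1; push_cast; ring
    have h1 : (jap vs ^ (3 - k)) ^ 2 ≤ 1 := by
      rw [← e2]; exact rpow_le_one_of_one_le_of_nonpos (one_le_jap vs) (by linarith)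
    rw [e1, e2, ← sq_abs (wS k g vs)]
    have h2 := inv_sq_le_kloc (v - vs)
    rw [← inv_pow] at h2
    have h3 := kloc_nonneg (v - vs)
    set G := |wS k g vs|
    set p := jap vs ^ (3 - k)
    set r := ‖v - vs‖⁻¹
    have h4 : (1 + r) * (G * p) ≤ (2 * N)⁻¹ * G ^ 2 + N / 2 * (p ^ 2 * (1 + r) ^ 2) := by
      have : (2 * N)⁻¹ * G ^ 2 + N / 2 * (p ^ 2 * (1 + r) ^ 2) - (1 + r) * (G * p) =
          (2 * N)⁻¹ * (G - N * (p * (1 + r))) ^ 2 := by field_simp; ring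
      have h5 : 0 ≤ (2 * N)⁻¹ * (G - N * (p * (1 + r))) ^ 2 := by positivity
      linarith
    have h6 : p ^ 2 * (1 + r) ^ 2 ≤ 2 * (2 * p ^ 2 + kloc (v - vs)) := by
      have : (1 + r) ^ 2 ≤ 2 * (2 + kloc (v - vs)) := by nlinarith [sq_nonneg (1 - r)]
      nlinarith [mul_le_mul_of_nonneg_left this (sq_nonneg p),
        mul_le_mul_of_nonneg_right h1 h3]
    nlinarith [mul_le_mul_of_nonneg_left h6 hN.le]
  calc _ ≤ ∫ vs, ((2 * N)⁻¹ * wS k g vs ^ 2 +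
        N * (2 * jap vs ^ (-(2 * k - 6)) + kloc (v - vs))) :=
        integral_mono_of_nonneg (ae_of_all _ fun vs => by positivity)
          ((i3.const_mul _).add (i4.const_mul N)) (ae_of_all _ hpt)
    _ = (2 * N)⁻¹ * (∫ vs, wS k g vs ^ 2) + N * (2 * I1 + I2) := by
        rw [integral_add (i3.const_mul _) (i4.const_mul N),
          integral_const_mul, integral_const_mul, integral_add (i1.const_mul 2) i2',
          integral_const_mul, integral_sub_left_eq_self kloc volume v]
    _ ≤ (2 * N)⁻¹ * N ^ 2 + N * (2 * I1 + I2) := by gcongr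
    _ ≤ _ := by
        have : (2 * N)⁻¹ * N ^ 2 = N / 2 := by field_simp
        rw [this]; nlinarith

/-! ### Bounds on the convolved coefficients -/

lemma wS_three (g : 𝓢(E3, ℝ)) (v : E3) : wS 3 g v = g v * jap v ^ 3 := by
  rw [wS_apply]; congr 1; exact_mod_cast rpow_natCast (jap v) 3

/-- `∫ (1 + |v - v*|⁻¹) ⟨v*⟩³ |g(v*)| dv*`. -/
noncomputable def Mg (g : 𝓢(E3, ℝ)) (v : E3) : ℝ := ∫ vs, (1 + ‖v - vs‖⁻¹) * |wS 3 g vs|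

lemma integrable_Mg (g : 𝓢(E3, ℝ)) (v : E3) :
    Integrable (fun vs => (1 + ‖v - vs‖⁻¹) * |wS 3 g vs|) := by
  have := ((adm_one.add adm_inv_norm).integrable (wS 3 g) v).norm
  refine this.congr (ae_of_all _ fun vs => ?_)
  simp only [norm_mul, Real.norm_eq_abs]
  rw [abs_of_nonneg (by positivity : 0 ≤ 1 + ‖v - vs‖⁻¹)]

lemma Mg_nonneg (g : 𝓢(E3, ℝ)) (v : E3) : 0 ≤ Mg g v :=
  integral_nonneg fun vs => by positivity

/-- The quadratic form of `a ∗ g` is controlled by the anisotropic weight. -/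
lemma A_bound (g : 𝓢(E3, ℝ)) (v : E3) (ξ : Fin 3 → ℝ) :
    |∑ i, ∑ j, cv (fun z => aK z i j) g v * (ξ i * ξ j)| ≤
      64 * Mg g v * ((jap v ^ 3)⁻¹ * (sqN ξ + crossSq v ξ)) := by
  have hi : ∀ i j, Integrable (fun vs => aK (v - vs) i j * g vs * (ξ i * ξ j)) :=
    fun i j => ((adm_aK i j).integrable g v).mul_const _
  have e : ∑ i, ∑ j, cv (fun z => aK z i j) g v * (ξ i * ξ j) =
      ∫ vs, (‖v - vs‖ ^ 3)⁻¹ * crossSq (v - vs) ξ * g vs := by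
    calc _ = ∑ i, ∑ j, ∫ vs, aK (v - vs) i j * g vs * (ξ i * ξ j) := by
          simp only [integral_mul_const]; rfl
      _ = ∫ vs, ∑ i, ∑ j, aK (v - vs) i j * g vs * (ξ i * ξ j) := by
          rw [integral_finsetSum _ fun i _ => integrable_finsetSum _ fun j _ => hi i j]
          exact Finset.sum_congr rfl fun i _ => (integral_finsetSum _ fun j _ => hi i j).symm
      _ = _ := by
          refine integral_congr_ae (ae_of_all _ fun vs => ?_)
          simp only [← qform_eq, Finset.sum_mul]
          exact Finset.sum_congr rfl fun i _ => Finset.sum_congr rfl fun j _ => by ring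
  rw [e, ← Real.norm_eq_abs]
  have := norm_integral_le_of_norm_le
    (f := fun vs => (‖v - vs‖ ^ 3)⁻¹ * crossSq (v - vs) ξ * g vs)
    ((integrable_Mg g v).mul_const (64 * ((jap v ^ 3)⁻¹ * (sqN ξ + crossSq v ξ))))
    (ae_of_all _ fun vs => by
      have hp := jap_pos vs
      rw [norm_mul, Real.norm_of_nonneg (mul_nonneg (by positivity) (crossSq_nonneg _ _)),
        wS_three, abs_mul, abs_of_pos (by positivity : 0 < jap vs ^ 3), Real.norm_eq_abs]
      calc _ ≤ (64 * ((1 + ‖v - vs‖⁻¹) * jap vs ^ 3) *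
            ((jap v ^ 3)⁻¹ * (sqN ξ + crossSq v ξ))) * |g vs| := by
            exact mul_le_mul_of_nonneg_right (qform_bound v vs ξ) (abs_nonneg _)
        _ = _ := by ring)
  refine this.trans (le_of_eq ?_)
  rw [integral_mul_const]
  unfold Mg; ring

/-- The squared density `g² ⟨v⟩⁶` as a Schwartz function. -/
noncomputable def Gam (g : 𝓢(E3, ℝ)) : 𝓢(E3, ℝ) := mS (wS 3 g) (wS 3 g)

/-- Bound for the term with the divergence of the kernel. On the singular part, the
arithmetic-geometric mean inequality with parameter `N` separates `h` from `u`, leaving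
`|z|⁻² ∗ (g²⟨v⟩⁶)` next to `h²`. -/
lemma B_bound (g : 𝓢(E3, ℝ)) {N : ℝ} (hN : 0 < N) (v : E3) (h u : ℝ) :
    (∫ vs, (‖v - vs‖ ^ 2)⁻¹ * |g vs|) * (|h| * |u|) ≤
      64 * (Mg g v * ((jap v ^ 2)⁻¹ * (|h| * |u|)) +
        (2 * N)⁻¹ * ((jap v ^ 3)⁻¹ * h ^ 2 * cv (fun z => (‖z‖ ^ 2)⁻¹) (Gam g) v) +
        N / 2 * (∫ z, kloc z) * ((jap v ^ 3)⁻¹ * u ^ 2)) := by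
  have hw := jap_pos v
  have i1 := integrable_Mg g v
  have i2 : Integrable (fun vs => (‖v - vs‖ ^ 2)⁻¹ * Gam g vs) :=
    adm_inv_norm_sq.integrable (Gam g) v
  have i3 : Integrable (fun vs => kloc (v - vs)) :=
    (show Integrable kloc volume from integrable_inv_norm_sq_ball).comp_sub_left v
  have j1 := i1.mul_const ((jap v ^ 2)⁻¹ * (|h| * |u|))
  have j2 := i2.const_mul ((2 * N)⁻¹ * ((jap v ^ 3)⁻¹ * h ^ 2))
  have j3 := i3.mul_const (N / 2 * ((jap v ^ 3)⁻¹ * u ^ 2))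
  have j12 : Integrable (fun vs =>
    (1 + ‖v - vs‖⁻¹) * |wS 3 g vs| * ((jap v ^ 2)⁻¹ * (|h| * |u|)) +
      (2 * N)⁻¹ * ((jap v ^ 3)⁻¹ * h ^ 2) * ((‖v - vs‖ ^ 2)⁻¹ * Gam g vs)) := j1.add j2
  have j123 : Integrable (fun vs =>
    (1 + ‖v - vs‖⁻¹) * |wS 3 g vs| * ((jap v ^ 2)⁻¹ * (|h| * |u|)) +
      (2 * N)⁻¹ * ((jap v ^ 3)⁻¹ * h ^ 2) * ((‖v - vs‖ ^ 2)⁻¹ * Gam g vs) +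
      kloc (v - vs) * (N / 2 * ((jap v ^ 3)⁻¹ * u ^ 2))) := j12.add j3
  have hpt : ∀ vs, (‖v - vs‖ ^ 2)⁻¹ * |g vs| * (|h| * |u|) ≤
    64 * ((1 + ‖v - vs‖⁻¹) * |wS 3 g vs| * ((jap v ^ 2)⁻¹ * (|h| * |u|)) +
      (2 * N)⁻¹ * ((jap v ^ 3)⁻¹ * h ^ 2) * ((‖v - vs‖ ^ 2)⁻¹ * Gam g vs) +
      kloc (v - vs) * (N / 2 * ((jap v ^ 3)⁻¹ * u ^ 2))) := by
    intro vs
    have hws := jap_pos vs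
    have e1 : |wS 3 g vs| = |g vs| * jap vs ^ 3 := by
      rw [wS_three, abs_mul, abs_of_pos (by positivity : 0 < jap vs ^ 3)]
    have e2 : Gam g vs = |wS 3 g vs| ^ 2 := by rw [Gam, mS_apply, sq_abs]; ring
    have hk := kloc_nonneg (v - vs)
    have hk2 := kloc_le (v - vs)
    have amgm : |wS 3 g vs| * (|h| * |u|) ≤
        (2 * N)⁻¹ * (h ^ 2 * |wS 3 g vs| ^ 2) + N / 2 * u ^ 2 := by
      have : (2 * N)⁻¹ * (h ^ 2 * |wS 3 g vs| ^ 2) + N / 2 * u ^ 2 - |wS 3 g vs| * (|h| * |u|) =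
          (2 * N)⁻¹ * (|h| * |wS 3 g vs| - N * |u|) ^ 2 := by
        rw [← sq_abs h, ← sq_abs u]; field_simp; ring
      have h5 : 0 ≤ (2 * N)⁻¹ * (|h| * |wS 3 g vs| - N * |u|) ^ 2 := by positivity
      linarith
    rw [e2]
    calc _ ≤ (64 * jap vs ^ 3 * ((jap v ^ 2)⁻¹ + (jap v ^ 3)⁻¹ * kloc (v - vs))) * |g vs| *
          (|h| * |u|) := by gcongr; exact inv_sq_bound v vs
      _ = 64 * (1 * |wS 3 g vs| * ((jap v ^ 2)⁻¹ * (|h| * |u|)) +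
          (jap v ^ 3)⁻¹ * kloc (v - vs) * (|wS 3 g vs| * (|h| * |u|))) := by rw [e1]; ring
      _ ≤ 64 * ((1 + ‖v - vs‖⁻¹) * |wS 3 g vs| * ((jap v ^ 2)⁻¹ * (|h| * |u|)) +
          (jap v ^ 3)⁻¹ * kloc (v - vs) * ((2 * N)⁻¹ * (h ^ 2 * |wS 3 g vs| ^ 2) +
            N / 2 * u ^ 2)) := by
          gcongr
          linarith [inv_nonneg.2 (norm_nonneg (v - vs))]
      _ = 64 * ((1 + ‖v - vs‖⁻¹) * |wS 3 g vs| * ((jap v ^ 2)⁻¹ * (|h| * |u|)) +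
          (2 * N)⁻¹ * ((jap v ^ 3)⁻¹ * h ^ 2) * (kloc (v - vs) * |wS 3 g vs| ^ 2) +
            kloc (v - vs) * (N / 2 * ((jap v ^ 3)⁻¹ * u ^ 2))) := by ring
      _ ≤ _ := by gcongr
  rw [← integral_mul_const]
  refine (integral_mono_of_nonneg (ae_of_all _ fun vs => by positivity)
    (j123.const_mul 64) (ae_of_all _ hpt)).trans (le_of_eq ?_)
  rw [integral_const_mul, integral_add j12 j3, integral_add j1 j2, integral_mul_const,
    integral_const_mul, integral_mul_const, integral_sub_left_eq_self kloc volume v]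
  unfold Mg cv; ring

lemma pd_wS (s : ℝ) (f : 𝓢(E3, ℝ)) (i : Fin 3) (v : E3) :
    dS i (wS s f) v = jap v ^ s * (dS i f v + s * v i * (jap v ^ 2)⁻¹ * f v) := by
  have e : ⇑(wS s f) = fun v => f v * jap v ^ s := funext (wS_apply s f)
  have hw := jap_pos v
  rw [dS_apply, e, pd_mul_jap_rpow, rpow_sub hw, dS_apply]
  have : jap v ^ (2:ℝ) = jap v ^ 2 := by exact_mod_cast rpow_natCast (jap v) 2
  rw [this]; ring

/-- The flux tested against `∇(f⟨v⟩^{2k})`, rewritten with `h = f⟨v⟩^k`; the cross terms cancel by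
symmetry of the kernel. -/
lemma flux_algebra (k : ℝ) (g f : 𝓢(E3, ℝ)) (v : E3) :
    ∑ i, ∑ j, (cv (fun z => aK z i j) g v * dS j f v -
      cv (fun z => aK z i j) (dS j g) v * f v) * dS i (wS (2 * k) f) v =
    ∑ i, ∑ j, cv (fun z => aK z i j) g v * (dS i (wS k f) v * dS j (wS k f) v) -
    (k * (jap v ^ 2)⁻¹ * wS k f v) ^ 2 * ∑ i, ∑ j, cv (fun z => aK z i j) g v * (v i * v j) -
    ∑ i, ∑ j, cv (fun z => aK z i j) (dS j g) v *
      (wS k f v * (dS i (wS k f) v + k * v i * (jap v ^ 2)⁻¹ * wS k f v)) := by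
  have hw := jap_pos v
  have hp : jap v ^ (2 * k) = (jap v ^ k) ^ 2 := by
    rw [← rpow_natCast, ← rpow_mul hw.le]; congr 1; push_cast; ring
  have hsym : ∀ i j, cv (fun z => aK z i j) g v = cv (fun z => aK z j i) g v := by
    intro i j
    congr 1
    funext z
    simp only [aK_apply, eq_comm (a := i) (b := j), mul_comm (z i)]
  simp only [pd_wS, wS_apply, hp, Fin.sum_univ_three]
  rw [hsym 1 0, hsym 2 0, hsym 2 1]
  ring

/-! ### Pointwise bound on the tested flux -/

/-- The density whose integral is `‖h‖²_{𝖧¹_A} + ‖h‖²_{L²}`. -/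
noncomputable def rho (h : 𝓢(E3, ℝ)) (v : E3) : ℝ :=
  h v ^ 2 + (jap v ^ 3)⁻¹ * (sqN (fun i => dS i h v) + crossSq v (fun i => dS i h v) + h v ^ 2)

lemma coord_q_le (v : E3) (i : Fin 3) : (v i * (jap v ^ 2)⁻¹) ^ 2 ≤ 1 := by
  have h1 := jap_sq v
  have h2 := abs_coord_le v i
  have h3 := norm_le_jap v
  have h4 := one_le_jap v
  have h5 : |v i * (jap v ^ 2)⁻¹| ≤ 1 := by
    rw [abs_mul, abs_of_pos (by positivity : 0 < (jap v ^ 2)⁻¹), ← div_eq_mul_inv,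
      div_le_one (by positivity)]
    nlinarith
  rw [← sq_abs]
  exact pow_le_one₀ (abs_nonneg _) h5

lemma cv_inv_nonneg (g : 𝓢(E3, ℝ)) (v : E3) : 0 ≤ cv (fun z => (‖z‖ ^ 2)⁻¹) (Gam g) v :=
  integral_nonneg fun vs => by
    simp only [Gam, mS_apply]
    exact mul_nonneg (by positivity) (mul_self_nonneg _)

/-- The terms with `a ∗ g` in `flux_algebra`, where `K N` bounds `Mg g v`. -/
lemma term_A {k K N : ℝ} (g h : 𝓢(E3, ℝ)) (v : E3) (hM : Mg g v ≤ K * N) (hKN : 0 ≤ K * N) :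
    |∑ i, ∑ j, cv (fun z => aK z i j) g v * (dS i h v * dS j h v) -
    (k * (jap v ^ 2)⁻¹ * h v) ^ 2 * ∑ i, ∑ j, cv (fun z => aK z i j) g v * (v i * v j)| ≤
    64 * (1 + k ^ 2) * (K * N) * rho h v := by
  have hw := one_le_jap v
  have hw0 := jap_pos v
  have a1 := A_bound g v (fun i => dS i h v)
  have a2 := A_bound g v (fun i => v i)
  have hs := sqN_nonneg (fun i => dS i h v)
  have hc := crossSq_nonneg v (fun i => dS i h v)
  have e1 : sqN (fun i => v i) + crossSq v (fun i => v i) = ‖v‖ ^ 2 := by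
    rw [norm_sq_eq]; unfold sqN crossSq; ring
  rw [e1] at a2
  have hr : ((jap v ^ 2)⁻¹) ^ 2 * ‖v‖ ^ 2 ≤ 1 := by
    have h1 := jap_sq v
    rw [inv_pow, inv_mul_le_iff₀ (by positivity), h1]
    nlinarith [sq_nonneg ‖v‖]
  have w3 : 0 < (jap v ^ 3)⁻¹ := by positivity
  have b1 : |∑ i, ∑ j, cv (fun z => aK z i j) g v * (dS i h v * dS j h v)| ≤
      64 * (K * N) * rho h v := by
    refine a1.trans ?_
    unfold rho
    have : (jap v ^ 3)⁻¹ * (sqN (fun i => dS i h v) + crossSq v (fun i => dS i h v)) ≤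
      h v ^ 2 + (jap v ^ 3)⁻¹ * (sqN (fun i => dS i h v) + crossSq v (fun i => dS i h v) + h v ^ 2)
       := by
      have := mul_nonneg w3.le (sq_nonneg (h v))
      nlinarith [sq_nonneg (h v)]
    gcongr
  have b2 : (k * (jap v ^ 2)⁻¹ * h v) ^ 2 *
      |∑ i, ∑ j, cv (fun z => aK z i j) g v * (v i * v j)| ≤ 64 * k ^ 2 * (K * N) * rho h v := by
    calc _ ≤ (k * (jap v ^ 2)⁻¹ * h v) ^ 2 * (64 * (K * N) * ((jap v ^ 3)⁻¹ * ‖v‖ ^ 2)) := by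
          gcongr; refine a2.trans ?_; gcongr
      _ = 64 * k ^ 2 * (K * N) * ((((jap v ^ 2)⁻¹) ^ 2 * ‖v‖ ^ 2) * ((jap v ^ 3)⁻¹ * h v ^ 2)) := by
          ring
      _ ≤ 64 * k ^ 2 * (K * N) * (1 * ((jap v ^ 3)⁻¹ * h v ^ 2)) := by gcongr
      _ ≤ _ := by
          gcongr
          unfold rho
          have := mul_nonneg w3.le hs
          have := mul_nonneg w3.le hc
          nlinarith [sq_nonneg (h v)]
  refine (abs_sub _ _).trans ?_
  rw [abs_mul, abs_of_nonneg (sq_nonneg (k * (jap v ^ 2)⁻¹ * h v))]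
  nlinarith

/-- The term with `a ∗ ∇g` in `flux_algebra`. Here `3456 = 9 · 6 · 64`: nine index pairs, the constant
in `abs_cv_aK_dS_le` and the one in `B_bound`. -/
lemma term_B {k K N : ℝ} (g h : 𝓢(E3, ℝ)) (v : E3) (hN : 0 < N) (hK : 0 < K)
    (hM : Mg g v ≤ K * N) :
    |∑ i, ∑ j, cv (fun z => aK z i j) (dS j g) v *
      (h v * (dS i h v + k * v i * (jap v ^ 2)⁻¹ * h v))| ≤
    3456 * ((K * (3 + 2 * k ^ 2) + (1 + k ^ 2) * ∫ z, kloc z) * N * rho h v +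
      N⁻¹ * ((jap v ^ 3)⁻¹ * h v ^ 2 * cv (fun z => (‖z‖ ^ 2)⁻¹) (Gam g) v)) := by
  have hw := one_le_jap v
  have hw0 := jap_pos v
  have w3 : 0 < (jap v ^ 3)⁻¹ := by positivity
  have w31 : (jap v ^ 3)⁻¹ ≤ 1 := inv_le_one_of_one_le₀ (one_le_pow₀ hw)
  have hG := cv_inv_nonneg g v
  have hI : 0 ≤ ∫ z, kloc z := integral_nonneg kloc_nonneg
  have hs := sqN_nonneg (fun i => dS i h v)
  have hc := crossSq_nonneg v (fun i => dS i h v)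
  set u : Fin 3 → ℝ := fun i => dS i h v + k * v i * (jap v ^ 2)⁻¹ * h v with hu
  set J := ∫ vs, (‖v - vs‖ ^ 2)⁻¹ * |g vs| with hJ
  set G := cv (fun z => (‖z‖ ^ 2)⁻¹) (Gam g) v
  have hu2 : ∀ i, (jap v ^ 3)⁻¹ * u i ^ 2 ≤ (2 + 2 * k ^ 2) * rho h v := by
    intro i
    have c1 := coord_q_le v i
    have c2 : u i ^ 2 ≤ 2 * dS i h v ^ 2 + 2 * k ^ 2 * h v ^ 2 := by
      have c3 : (k * v i * (jap v ^ 2)⁻¹ * h v) ^ 2 ≤ k ^ 2 * h v ^ 2 := by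
        calc _ = (v i * (jap v ^ 2)⁻¹) ^ 2 * (k ^ 2 * h v ^ 2) := by ring
          _ ≤ 1 * (k ^ 2 * h v ^ 2) := by gcongr
          _ = _ := one_mul _
      simp only [hu]
      nlinarith [sq_nonneg (dS i h v - k * v i * (jap v ^ 2)⁻¹ * h v)]
    have c4 : dS i h v ^ 2 ≤ sqN (fun i => dS i h v) := by
      unfold sqN
      fin_cases i <;> simp <;>
        nlinarith [sq_nonneg (dS 0 h v), sq_nonneg (dS 1 h v), sq_nonneg (dS 2 h v)]
    have c5 : (jap v ^ 3)⁻¹ * dS i h v ^ 2 ≤ rho h v := by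
      unfold rho
      nlinarith [mul_le_mul_of_nonneg_left c4 w3.le, mul_nonneg w3.le hc,
        mul_nonneg w3.le (sq_nonneg (h v)), sq_nonneg (h v)]
    have c6 : (jap v ^ 3)⁻¹ * h v ^ 2 ≤ rho h v := by
      unfold rho
      nlinarith [mul_nonneg w3.le hs, mul_nonneg w3.le hc, sq_nonneg (h v)]
    calc _ ≤ (jap v ^ 3)⁻¹ * (2 * dS i h v ^ 2 + 2 * k ^ 2 * h v ^ 2) := by gcongr
      _ = 2 * ((jap v ^ 3)⁻¹ * dS i h v ^ 2) + 2 * k ^ 2 * ((jap v ^ 3)⁻¹ * h v ^ 2) := by ring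
      _ ≤ 2 * rho h v + 2 * k ^ 2 * rho h v := by gcongr
      _ = _ := by ring
  have hq : ∀ i, (jap v ^ 2)⁻¹ * (|h v| * |u i|) ≤ (3 + 2 * k ^ 2) * rho h v := by
    intro i
    have d1 : ((jap v ^ 2)⁻¹) ^ 2 ≤ (jap v ^ 3)⁻¹ := by
      rw [inv_pow, ← pow_mul]
      gcongr
      norm_num
    have d2 : h v ^ 2 ≤ rho h v := by
      unfold rho
      have : 0 ≤ (jap v ^ 3)⁻¹ *
        (sqN (fun i => dS i h v) + crossSq v (fun i => dS i h v) + h v ^ 2) := by positivity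
      linarith
    have d3 := mul_le_mul_of_nonneg_right d1 (sq_nonneg (u i))
    have d4 := hu2 i
    rw [← sq_abs (u i)] at d3 d4
    rw [← sq_abs (h v)] at d2
    nlinarith [sq_nonneg (|h v| - (jap v ^ 2)⁻¹ * |u i|), sq_nonneg (|u i|),
      mul_nonneg w3.le (sq_nonneg (|u i|))]
  have hrho : 0 ≤ rho h v := by unfold rho; positivity
  have hJu : ∀ i, J * (|h v| * |u i|) ≤ 64 *
      ((K * (3 + 2 * k ^ 2) + (1 + k ^ 2) * ∫ z, kloc z) * N * rho h v +
      N⁻¹ * ((jap v ^ 3)⁻¹ * h v ^ 2 * G)) := by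
    intro i
    refine (B_bound g hN v (h v) (u i)).trans ?_
    have e : ((K * (3 + 2 * k ^ 2) + (1 + k ^ 2) * ∫ z, kloc z) * N * rho h v +
      N⁻¹ * ((jap v ^ 3)⁻¹ * h v ^ 2 * G)) =
      K * N * ((3 + 2 * k ^ 2) * rho h v) + N⁻¹ * ((jap v ^ 3)⁻¹ * h v ^ 2 * G)
        + N / 2 * (∫ z, kloc z) * ((2 + 2 * k ^ 2) * rho h v) := by ring
    rw [e]
    have hq := hq i
    have hu2 := hu2 i
    have hN2 : (2 * N)⁻¹ ≤ N⁻¹ := by gcongr; linarith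
    gcongr
  have hB : ∀ i j, |cv (fun z => aK z i j) (dS j g) v * (h v * u i)| ≤ 6 * (J * (|h v| * |u i|)) := by
    intro i j
    rw [abs_mul, abs_mul (h v)]
    have := abs_cv_aK_dS_le i j g v
    calc _ ≤ (6 * J) * (|h v| * |u i|) := by gcongr
      _ = _ := by ring
  calc _ ≤ ∑ i, ∑ j : Fin 3, |cv (fun z => aK z i j) (dS j g) v * (h v * u i)| :=
        (Finset.abs_sum_le_sum_abs _ _).trans
          (Finset.sum_le_sum fun i _ => Finset.abs_sum_le_sum_abs _ _)
    _ ≤ ∑ i : Fin 3, ∑ j : Fin 3, 6 * (64 *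
      ((K * (3 + 2 * k ^ 2) + (1 + k ^ 2) * ∫ z, kloc z) * N * rho h v +
      N⁻¹ * ((jap v ^ 3)⁻¹ * h v ^ 2 * G))) := by
        refine Finset.sum_le_sum fun i _ => Finset.sum_le_sum fun j _ => (hB i j).trans ?_
        have := hJu i
        gcongr
    _ = _ := by simp only [Fin.sum_univ_three]; ring

/-! ### Norms and the final estimate -/

lemma integrable_sq (ψ : 𝓢(E3, ℝ)) : Integrable (fun v => ψ v ^ 2) :=
  (mS ψ ψ).integrable.congr (ae_of_all _ fun v => by simp only [mS_apply]; ring)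

lemma wS_half_sq (ψ : 𝓢(E3, ℝ)) (v : E3) :
    wS (-(3/2)) ψ v ^ 2 = (jap v ^ 3)⁻¹ * ψ v ^ 2 := by
  have hw := jap_pos v
  rw [wS_apply, mul_pow, ← rpow_natCast (jap v ^ _), ← rpow_mul hw.le]
  have : jap v ^ (-(3/2) * ((2:ℕ):ℝ)) = (jap v ^ 3)⁻¹ := by
    rw [← rpow_natCast, ← rpow_neg hw.le]; norm_num
  rw [this]; ring

/-- Fubini and Hardy's inequality combined. -/
lemma hardy_conv (Γ H : 𝓢(E3, ℝ)) (hΓ : ∀ v, 0 ≤ Γ v) :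
    Integrable (fun v => H v ^ 2 * cv (fun z => (‖z‖ ^ 2)⁻¹) Γ v) ∧
    ∫ v, H v ^ 2 * cv (fun z => (‖z‖ ^ 2)⁻¹) Γ v ≤
      (∫ v, Γ v) * (4 * ∫ v, ∑ i, dS i H v ^ 2) := by
  have i0 : Integrable (fun v => H v ^ 2 * cv (fun z => (‖z‖ ^ 2)⁻¹) Γ v) := by
    refine (adm_inv_norm_sq.integrable_cv_mul Γ (mS H H)).congr (ae_of_all _ fun v => ?_)
    simp only [mS_apply]; ring
  refine ⟨i0, ?_⟩
  set F : E3 → E3 → ℝ := fun v vs => H v ^ 2 * ((‖v - vs‖ ^ 2)⁻¹ * Γ vs) with hF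
  have hF0 : ∀ v vs, 0 ≤ F v vs := fun v vs => by
    have := hΓ vs
    simp only [hF]; positivity
  have hInt : Integrable (Function.uncurry F) (volume.prod volume) := by
    have mF : Measurable (Function.uncurry F) := by
      have h1 : Measurable (fun p : E3 × E3 => H p.1 ^ 2) :=
        (H.continuous.measurable.comp measurable_fst).pow_const 2
      have h2 : Measurable (fun p : E3 × E3 => Γ p.2) := Γ.continuous.measurable.comp measurable_snd
      have h3 : Measurable (fun p : E3 × E3 => (‖p.1 - p.2‖ ^ 2)⁻¹) := by fun_prop
      exact h1.mul (h3.mul h2)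
    rw [integrable_prod_iff mF.aestronglyMeasurable]
    constructor
    · exact ae_of_all _ fun v => (adm_inv_norm_sq.integrable Γ v).const_mul (H v ^ 2)
    · refine i0.congr (ae_of_all _ fun v => ?_)
      have : ∀ vs, ‖Function.uncurry F (v, vs)‖ = F v vs := fun vs =>
        Real.norm_of_nonneg (hF0 v vs)
      simp only [this]
      simp only [hF]
      rw [integral_const_mul]; rfl
  have e1 : ∫ v, H v ^ 2 * cv (fun z => (‖z‖ ^ 2)⁻¹) Γ v = ∫ v, ∫ vs, F v vs := by
    refine integral_congr_ae (ae_of_all _ fun v => ?_)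
    simp only [hF]
    rw [integral_const_mul]; rfl
  rw [e1, integral_integral_swap hInt, ← integral_mul_const]
  refine integral_mono_of_nonneg (ae_of_all _ fun vs => integral_nonneg fun v => hF0 v vs)
    (Γ.integrable.mul_const _) (ae_of_all _ fun vs => ?_)
  have e2 : ∫ v, F v vs = Γ vs * ∫ v, (‖v - vs‖ ^ 2)⁻¹ * H v ^ 2 := by
    rw [← integral_const_mul]
    refine integral_congr_ae (ae_of_all _ fun v => ?_)
    simp only [hF]; ring
  simp only [e2]
  exact mul_le_mul_of_nonneg_left (hardy H vs).2 (hΓ vs)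

lemma coord_tg (i : Fin 3) : Function.HasTemperateGrowth (fun v : E3 => v i) :=
  (EuclideanSpace.proj i : E3 →L[ℝ] ℝ).hasTemperateGrowth

/-- The Schwartz function `v_i f`. -/
noncomputable def cS (i : Fin 3) (f : 𝓢(E3, ℝ)) : 𝓢(E3, ℝ) :=
  SchwartzMap.smulLeftCLM ℝ (fun v : E3 => v i) f

lemma cS_apply (i : Fin 3) (f : 𝓢(E3, ℝ)) (v : E3) : cS i f v = v i * f v := by
  unfold cS
  rw [SchwartzMap.smulLeftCLM_apply_apply (coord_tg i), smul_eq_mul]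

/-- The Schwartz function `(v_i ∂_j - v_j ∂_i) f`. -/
noncomputable def rS (i j : Fin 3) (f : 𝓢(E3, ℝ)) : 𝓢(E3, ℝ) := cS i (dS j f) - cS j (dS i f)

lemma rS_apply (i j : Fin 3) (f : 𝓢(E3, ℝ)) (v : E3) : rS i j f v = rotD i j f v := by
  unfold rS
  rw [_root_.sub_apply, cS_apply, cS_apply]; rfl

lemma Lpl_two_sq (l : ℝ) (ψ : 𝓢(E3, ℝ)) : Lpl 2 l ψ ^ 2 = ∫ v, wS l ψ v ^ 2 := by
  have e : ∫ v : E3, |ψ v| ^ (2:ℝ) * jap v ^ (l * 2) = ∫ v, wS l ψ v ^ 2 := by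
    refine integral_congr_ae (ae_of_all _ fun v => ?_)
    have hw := jap_pos v
    simp only [wS_apply]
    rw [mul_pow, rpow_mul hw.le, ← sq_abs (ψ v)]
    norm_cast
  unfold Lpl
  rw [e, ← rpow_natCast, ← rpow_mul (integral_nonneg fun v => sq_nonneg _)]
  norm_num

lemma multiIdx_one : multiIdx 1 = {![0,0,0], ![1,0,0], ![0,1,0], ![0,0,1]} := by
  decide

lemma pairs_eq : Finset.univ.filter (fun p : Fin 3 × Fin 3 => p.1 < p.2) =
    {(0,1), (0,2), (1,2)} := by decide

lemma rho_eq (h : 𝓢(E3, ℝ)) (v : E3) : rho h v = h v ^ 2 + (wS (-(3/2)) (dS 0 h) v ^ 2 +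
    (wS (-(3/2)) (dS 1 h) v ^ 2 + (wS (-(3/2)) (dS 2 h) v ^ 2 + (wS (-(3/2)) (rS 0 1 h) v ^ 2 +
    (wS (-(3/2)) (rS 0 2 h) v ^ 2 + (wS (-(3/2)) (rS 1 2 h) v ^ 2 + wS (-(3/2)) h v ^ 2)))))) := by
  simp only [wS_half_sq, rS_apply, rotD, rho, sqN, crossSq, dS_apply]
  ring

lemma integrable_rho (h : 𝓢(E3, ℝ)) : Integrable (rho h) := by
  have : rho h = _ := funext (rho_eq h)
  rw [this]
  exact (integrable_sq _).add ((integrable_sq _).add ((integrable_sq _).add ((integrable_sq _).add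
    ((integrable_sq _).add ((integrable_sq _).add ((integrable_sq _).add (integrable_sq _)))))))

lemma integral_add_sq (ψ : 𝓢(E3, ℝ)) {b : E3 → ℝ} (hb : Integrable b) :
    Integrable (fun v => ψ v ^ 2 + b v) ∧
    ∫ v, (ψ v ^ 2 + b v) = (∫ v, ψ v ^ 2) + ∫ v, b v :=
  ⟨(integrable_sq ψ).add hb, integral_add (integrable_sq ψ) hb⟩

/-- The right-hand side of the estimate is the integral of the density `rho`. -/
lemma integral_rho (k : ℝ) (f : 𝓢(E3, ℝ)) :
    HA (fun v => f v * jap v ^ k) ^ 2 + Lpl 2 k f ^ 2 = ∫ v, rho (wS k f) v := by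
  have e : (fun v => f v * jap v ^ k) = ⇑(wS k f) := (funext (wS_apply k f)).symm
  rw [e, Lpl_two_sq]
  set h := wS k f
  have hpos : 0 ≤ HAsq h := by unfold HAsq HSobSq; positivity
  rw [HA, Real.sq_sqrt hpos]
  have r01 : rotD 0 1 h = ⇑(rS 0 1 h) := (funext (rS_apply 0 1 h)).symm
  have r02 : rotD 0 2 h = ⇑(rS 0 2 h) := (funext (rS_apply 0 2 h)).symm
  have r12 : rotD 1 2 h = ⇑(rS 1 2 h) := (funext (rS_apply 1 2 h)).symm
  have p0 : pdM ![0,0,0] h = ⇑h := rfl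
  have p1 : pdM ![1,0,0] h = ⇑(dS 0 h) := rfl
  have p2 : pdM ![0,1,0] h = ⇑(dS 1 h) := rfl
  have p3 : pdM ![0,0,1] h = ⇑(dS 2 h) := rfl
  have eA : HAsq h = (Lpl 2 (-(3/2)) (rS 0 1 h) ^ 2 + (Lpl 2 (-(3/2)) (rS 0 2 h) ^ 2 +
      Lpl 2 (-(3/2)) (rS 1 2 h) ^ 2)) + (Lpl 2 (-(3/2)) h ^ 2 + (Lpl 2 (-(3/2)) (dS 0 h) ^ 2 +
      (Lpl 2 (-(3/2)) (dS 1 h) ^ 2 + Lpl 2 (-(3/2)) (dS 2 h) ^ 2))) := by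
    unfold HAsq HSobSq
    rw [pairs_eq, multiIdx_one, Finset.sum_insert (by decide), Finset.sum_insert (by decide),
      Finset.sum_singleton, Finset.sum_insert (by decide), Finset.sum_insert (by decide),
      Finset.sum_insert (by decide), Finset.sum_singleton, p0, p1, p2, p3]
    simp only [r01, r02, r12]
  rw [eA]
  simp only [Lpl_two_sq, rho_eq]
  have a0 := integrable_sq (wS (-(3/2)) h)
  have a1 := integral_add_sq (wS (-(3/2)) (rS 1 2 h)) a0
  have a2 := integral_add_sq (wS (-(3/2)) (rS 0 2 h)) a1.1
  have a3 := integral_add_sq (wS (-(3/2)) (rS 0 1 h)) a2.1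
  have a4 := integral_add_sq (wS (-(3/2)) (dS 2 h)) a3.1
  have a5 := integral_add_sq (wS (-(3/2)) (dS 1 h)) a4.1
  have a6 := integral_add_sq (wS (-(3/2)) (dS 0 h)) a5.1
  have a7 := integral_add_sq h a6.1
  rw [a7.2, a6.2, a5.2, a4.2, a3.2, a2.2, a1.2]
  ring

lemma rho_nonneg (h : 𝓢(E3, ℝ)) (v : E3) : 0 ≤ rho h v := by
  rw [rho_eq]; positivity

/-- The gradient of `⟨v⟩^{-3/2}h`, to which Hardy's inequality is applied, is controlled by `rho`. -/
lemma grad_half_le (h : 𝓢(E3, ℝ)) (v : E3) :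
    ∑ i, dS i (wS (-(3/2)) h) v ^ 2 ≤ 16 * rho h v := by
  have hw := jap_pos v
  have hp : (jap v ^ (-(3/2) : ℝ)) ^ 2 = (jap v ^ 3)⁻¹ := by
    rw [← rpow_natCast (jap v ^ _), ← rpow_mul hw.le, ← rpow_natCast, ← rpow_neg hw.le]; norm_num
  have w3 : 0 < (jap v ^ 3)⁻¹ := by positivity
  have h1 : ∀ i, dS i (wS (-(3/2)) h) v ^ 2 ≤
      (jap v ^ 3)⁻¹ * (2 * dS i h v ^ 2 + 5 * h v ^ 2) := by
    intro i
    rw [pd_wS, mul_pow, hp]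
    have := coord_q_le v i
    have h2 : (v i * (jap v ^ 2)⁻¹ * h v) ^ 2 ≤ h v ^ 2 := by
      rw [mul_pow]; nlinarith [sq_nonneg (h v)]
    gcongr
    nlinarith [sq_nonneg (dS i h v + 3/2 * (v i * (jap v ^ 2)⁻¹ * h v)), sq_nonneg (h v)]
  refine (Finset.sum_le_sum fun i _ => h1 i).trans ?_
  simp only [Fin.sum_univ_three]
  unfold rho sqN
  have hc := crossSq_nonneg v (fun i => dS i h v)
  have := mul_nonneg w3.le hc
  have := mul_nonneg w3.le (sq_nonneg (h v))
  have := mul_nonneg w3.le (sq_nonneg (dS 0 h v))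
  have := mul_nonneg w3.le (sq_nonneg (dS 1 h v))
  have := mul_nonneg w3.le (sq_nonneg (dS 2 h v))
  nlinarith [sq_nonneg (h v)]

/-- The estimate with `‖g‖_{L²_k}` replaced by any positive upper bound `N`. -/
lemma bound_of_N {k : ℝ} (hk : 9 / 2 < k) : ∃ C > 0, ∀ (f g : 𝓢(E3, ℝ)) (N : ℝ), 0 < N →
    ∫ v, wS k g v ^ 2 ≤ N ^ 2 →
    |pairL (landauQ g f) (wS (2 * k) f)| ≤ C * N * ∫ v, rho (wS k f) v := by
  obtain ⟨K, hK, hKg⟩ := conv_bound hk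
  have hI : 0 ≤ ∫ z, kloc z := integral_nonneg kloc_nonneg
  set C1 := 64 * (1 + k ^ 2) * K + 3456 * (K * (3 + 2 * k ^ 2) + (1 + k ^ 2) * ∫ z, kloc z) with hC1
  refine ⟨C1 + 3456 * 64, by positivity, fun f g N hN hg => ?_⟩
  obtain ⟨hInt, heq⟩ := pairing_eq g f (wS (2 * k) f)
  rw [heq, abs_neg]
  set h := wS k f with hh
  set H := wS (-(3/2)) h with hH
  have hΓ : ∀ v, 0 ≤ Gam g v := fun v => by rw [Gam, mS_apply]; exact mul_self_nonneg _
  obtain ⟨iG, bG⟩ := hardy_conv (Gam g) H hΓ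
  have hΓi : ∫ v, Gam g v ≤ N ^ 2 := by
    refine (integral_mono (Gam g).integrable (integrable_sq (wS k g)) fun v => ?_).trans hg
    have hw := one_le_jap v
    simp only [Gam, mS_apply, wS_apply]
    rw [← sq, mul_pow, mul_pow]
    have h3 : jap v ^ (3:ℝ) ≤ jap v ^ k := rpow_le_rpow_of_exponent_le hw (by linarith)
    have : 0 ≤ jap v ^ (3:ℝ) := rpow_nonneg (by linarith) _
    gcongr
  have hgrad : ∫ v, ∑ i, dS i H v ^ 2 ≤ 16 * ∫ v, rho h v := by
    rw [← integral_const_mul]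
    exact integral_mono (integrable_grad_sq H) ((integrable_rho h).const_mul 16)
      fun v => grad_half_le h v
  have hρ : 0 ≤ ∫ v, rho h v := integral_nonneg (rho_nonneg h)
  have hpt : ∀ v, ‖∑ i, ∑ j, (cv (fun z => aK z i j) g v * dS j f v -
      cv (fun z => aK z i j) (dS j g) v * f v) * dS i (wS (2 * k) f) v‖ ≤
      C1 * N * rho h v + 3456 * N⁻¹ * (H v ^ 2 * cv (fun z => (‖z‖ ^ 2)⁻¹) (Gam g) v) := by
    intro v
    rw [flux_algebra, Real.norm_eq_abs]
    have hM := hKg g N hN hg v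
    refine (abs_sub _ _).trans ((add_le_add (term_A g h v hM (by positivity))
      (term_B g h v hN hK hM)).trans (le_of_eq ?_))
    rw [hH, wS_half_sq, hC1]
    ring
  rw [← Real.norm_eq_abs]
  refine (norm_integral_le_of_norm_le (((integrable_rho h).const_mul (C1 * N)).add
    (iG.const_mul (3456 * N⁻¹))) (ae_of_all _ hpt)).trans ?_
  simp only [Pi.add_apply]
  rw [integral_add ((integrable_rho h).const_mul (C1 * N)) (iG.const_mul (3456 * N⁻¹)),
    integral_const_mul, integral_const_mul]
  have hfin : ∫ v, H v ^ 2 * cv (fun z => (‖z‖ ^ 2)⁻¹) (Gam g) v ≤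
      N ^ 2 * (4 * (16 * ∫ v, rho h v)) := by
    refine bG.trans ?_
    have : 0 ≤ ∫ v, ∑ i, dS i H v ^ 2 := integral_nonneg fun v => by positivity
    gcongr
  calc _ ≤ C1 * N * (∫ v, rho h v) + 3456 * N⁻¹ * (N ^ 2 * (4 * (16 * ∫ v, rho h v))) := by gcongr
    _ = _ := by field_simp; ring

/-- for `k > 9/2` there is `C = C(k)` such that for all Schwartz `f, g`:
`|⟨Q(g,f), f⟨v⟩^{2k}⟩| ≤ C ‖g‖_{L²_k} ( ‖f⟨v⟩^k‖²_{𝖧¹_A} + ‖f‖²_{L²_k} )`. -/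
theorem landau_quadratic_bound (k : ℝ) (hk : 9 / 2 < k) :
    ∃ C > 0, ∀ f g : SchwartzMap E3 ℝ,
      |pairL (landauQ (⇑g) (⇑f)) (fun v => f v * jap v ^ (2 * k))|
      ≤ C * Lpl 2 k (⇑g) * ((HA (fun v => f v * jap v ^ k)) ^ 2 + (Lpl 2 k (⇑f)) ^ 2) := by
  obtain ⟨C, hC, hb⟩ := bound_of_N hk
  refine ⟨C, hC, fun f g => ?_⟩
  have e : (fun v => f v * jap v ^ (2 * k)) = ⇑(wS (2 * k) f) := (funext (wS_apply _ f)).symm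
  rw [integral_rho, e]
  have hL0 : 0 ≤ Lpl 2 k g := by
    unfold Lpl
    exact rpow_nonneg (integral_nonneg fun v =>
      mul_nonneg (rpow_nonneg (abs_nonneg _) _) (rpow_nonneg (jap_pos v).le _)) _
  have hL := Lpl_two_sq k g
  set R := ∫ v, rho (wS k f) v
  have hR : 0 ≤ R := integral_nonneg (rho_nonneg _)
  -- `N = ‖g‖ + δ` with `δ ↓ 0`, since the bound requires `N > 0`.
  refine le_of_forall_pos_le_add fun ε hε => ?_
  have hδ : 0 < ε / (C * R + 1) := by positivity
  refine (hb f g (Lpl 2 k g + ε / (C * R + 1)) (by positivity) ?_).trans ?_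
  · rw [← hL]; gcongr; linarith
  · have : C * R * (ε / (C * R + 1)) ≤ ε := by
      rw [mul_div_assoc', div_le_iff₀ (by positivity)]
      nlinarith [mul_nonneg hC.le hR]
    nlinarith
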